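/- arXiv:1310.7059 — 5 statements merged into one kernel-verified Lean document; each statement's English description precedes it below -/
import Mathlib

section
/- Fix integers n ≥ k ≥ 1 and a partition λ = (λ_1 ≥ λ_2 ≥ ⋯ ≥ λ_k ≥ 0) with λ_1 ≤ n−k. There exists a bijection φ between the set of Condensed Catalan tableaux of shape λ and the set of Catalan paths constrained by λ such that for every tableau T, if the filling of T contains j α's and ℓ β's, then the weight of the path φ(T) equals α^j β^ℓ; in particular φ is weight-preserving once both sides are multiplied by the boundary factor α^k β^{n−k}. -/
open scoped Classical
open Finset

/-- A Condensed Catalan tableau with `k` rows inside a rectangle of width `w`,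
of shape `lam`: cells are `none` (empty), `some true` (an α) or `some false` (a β).
Cells outside the Young diagram of `lam` are empty; every box strictly west of a β in
its row is empty; every box strictly north of an α in its column is empty; and every
box with no α strictly south of it in its column and no β strictly east of it in its
row is nonempty. -/
def IsCCT (k w : ℕ) (lam : Fin k → ℕ) (F : Fin k → Fin w → Option Bool) : Prop :=
  (∀ (i : Fin k) (c : Fin w), lam i ≤ (c : ℕ) → F i c = none) ∧
  (∀ (i : Fin k) (c c' : Fin w), F i c = some false → c' < c → F i c' = none) ∧
  (∀ (i i' : Fin k) (c : Fin w), F i c = some true → i' < i → F i' c = none) ∧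
  (∀ (i : Fin k) (c : Fin w), (c : ℕ) < lam i →
    (∀ i' : Fin k, i < i' → F i' c ≠ some true) →
    (∀ c' : Fin w, c < c' → (c' : ℕ) < lam i → F i c' ≠ some false) →
    F i c ≠ none)

/-- The number of α's in the filling. -/
def aCount (k w : ℕ) (F : Fin k → Fin w → Option Bool) : ℕ :=
  (Finset.univ.filter fun p : Fin k × Fin w => F p.1 p.2 = some true).card

/-- The number of β's in the filling. -/
def bCount (k w : ℕ) (F : Fin k → Fin w → Option Bool) : ℕ :=
  (Finset.univ.filter fun p : Fin k × Fin w => F p.1 p.2 = some false).card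

/-- A Catalan path constrained by `lam`, encoded by the sequence `C` where `C i` is the
number of columns strictly west of the south step of the path in row `i`:
`C` is weakly decreasing and `C i ≤ lam i`. -/
def IsCatalanPath (k : ℕ) (lam : Fin k → ℕ) (C : Fin k → ℕ) : Prop :=
  (∀ i j : Fin k, i ≤ j → C j ≤ C i) ∧ (∀ i, C i ≤ lam i)

/-- The number of west steps of the Catalan path `C` lying strictly above the
southeast border `L` of the Young diagram of `lam` (each such step is weighted α). -/
def pathAlphaCount (k : ℕ) (lam C : Fin k → ℕ) : ℕ :=
  (let lamE : ℕ → ℕ := fun t => if h : t < k then lam ⟨t, h⟩ else 0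
   let CE : ℕ → ℕ := fun t => if h : t < k then C ⟨t, h⟩ else 0
   (lamE 0 - CE 0) + ∑ t ∈ Finset.range k, (min (CE t) (lamE (t + 1)) - CE (t + 1)))

/-- The number of south steps of the Catalan path `C` not on the west boundary of the
rectangle (each such step is weighted β). -/
def pathBetaCount (k : ℕ) (C : Fin k → ℕ) : ℕ :=
  (Finset.univ.filter fun i : Fin k => 0 < C i).card

/-- The weight of the Catalan path `C` in `ℤ[α,β]`, where `α = X 0`, `β = X 1`. -/
noncomputable def pathWeight (k : ℕ) (lam C : Fin k → ℕ) : MvPolynomial (Fin 2) ℤ :=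
  MvPolynomial.X 0 ^ pathAlphaCount k lam C * MvPolynomial.X 1 ^ pathBetaCount k C

lemma downclosed_card {m : ℕ} (p : Fin m → Prop) [DecidablePred p] (hp : ∀ i j, i ≤ j → p j → p i) (i : Fin m) :
    (i : ℕ) < (univ.filter p).card ↔ p i := by
  constructor
  · intro h
    by_contra hn
    have : univ.filter p ⊆ Finset.Iio i := by
      intro j hj
      simp only [mem_filter, mem_univ, true_and] at hj
      rw [Finset.mem_Iio]
      by_contra h2
      exact hn (hp i j (not_lt.mp h2) hj)
    have := Finset.card_le_card this
    rw [Fin.card_Iio] at this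
    omega
  · intro h
    have : Finset.Iic i ⊆ univ.filter p := by
      intro j hj
      simp only [mem_filter, mem_univ, true_and]
      exact hp j i (Finset.mem_Iic.mp hj) h
    have := Finset.card_le_card this
    rw [Fin.card_Iic] at this
    omega

lemma card_fin_lt (m a : ℕ) (h : a ≤ m) : (univ.filter fun i : Fin m => (i : ℕ) < a).card = a := by
  rw [Fin.card_filter_val_lt]; omega

lemma exists_upper {k : ℕ} (O : Finset (Fin k)) (b : ℕ) (hb : b ≤ O.card) :
    ∃ S ⊆ O, S.card = b ∧ ∀ i ∈ S, ∀ j ∈ O, i < j → j ∈ S := by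
  induction b with
  | zero => exact ⟨∅, by simp⟩
  | succ b ih =>
    obtain ⟨S, hS, hc, hu⟩ := ih (by omega)
    have hne : (O \ S).Nonempty := by
      rw [← Finset.card_pos, Finset.card_sdiff_of_subset hS]; omega
    have hm := Finset.max'_mem _ hne
    set x := (O \ S).max' hne with hx
    rw [mem_sdiff] at hm
    refine ⟨insert x S, ?_, ?_, ?_⟩
    · intro y hy
      rcases mem_insert.mp hy with rfl | h
      · exact hm.1
      · exact hS h
    · rw [card_insert_of_notMem hm.2, hc]
    · intro i hi j hj hij
      rw [mem_insert]
      by_cases hjS : j ∈ S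
      · exact Or.inr hjS
      · rcases mem_insert.mp hi with rfl | h
        · have := Finset.le_max' (O \ S) j (mem_sdiff.mpr ⟨hj, hjS⟩)
          exact absurd hij (not_lt.mpr this)
        · exact Or.inr (hu i h j hj hij)

lemma upper_unique {k : ℕ} (O S S' : Finset (Fin k)) (hS : S ⊆ O) (hS' : S' ⊆ O)
    (hc : S.card = S'.card) (hu : ∀ i ∈ S, ∀ j ∈ O, i < j → j ∈ S)
    (hu' : ∀ i ∈ S', ∀ j ∈ O, i < j → j ∈ S') : S = S' := by
  by_cases h : S ⊆ S'
  · exact Finset.eq_of_subset_of_card_le h hc.ge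
  · obtain ⟨x, hx, hx'⟩ := Finset.not_subset.mp h
    refine (Finset.eq_of_subset_of_card_le ?_ hc.le).symm
    intro y hy
    rcases lt_trichotomy x y with h1 | h1 | h1
    · exact hu x hx y (hS' hy) h1
    · exact h1 ▸ hx
    · exact absurd (hu' y hy x (hS hx) h1) hx'

noncomputable def hh (k : ℕ) (lam : Fin k → ℕ) (c : ℕ) : ℕ :=
  (univ.filter fun i : Fin k => c < lam i).card

noncomputable def vset (k w : ℕ) (F : Fin k → Fin w → Option Bool) (c : ℕ) : Finset (Fin k) :=
  univ.filter fun i : Fin k => ∃ c' : Fin w, c ≤ (c' : ℕ) ∧ F i c' = some false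

lemma vset_anti {k w : ℕ} (F : Fin k → Fin w → Option Bool) {c d : ℕ} (h : c ≤ d) :
    vset k w F d ⊆ vset k w F c := by
  intro i
  simp only [vset, mem_filter, mem_univ, true_and]
  rintro ⟨c', h1, h2⟩
  exact ⟨c', h.trans h1, h2⟩

lemma vset_sub {k w : ℕ} {lam : Fin k → ℕ} {F : Fin k → Fin w → Option Bool}
    (hF : IsCCT k w lam F) (c : ℕ) : vset k w F c ⊆ univ.filter fun i : Fin k => c < lam i := by
  intro i
  simp only [vset, mem_filter, mem_univ, true_and]
  rintro ⟨c', h1, h2⟩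
  by_contra h
  have := hF.1 i c' (by omega)
  simp [this] at h2

lemma vset_le {k w : ℕ} {lam : Fin k → ℕ} {F : Fin k → Fin w → Option Bool}
    (hF : IsCCT k w lam F) (c : ℕ) : (vset k w F c).card ≤ hh k lam c :=
  Finset.card_le_card (vset_sub hF c)

lemma bCount_eq {k w : ℕ} {lam : Fin k → ℕ} {F : Fin k → Fin w → Option Bool}
    (hF : IsCCT k w lam F) : bCount k w F = (vset k w F 0).card := by
  unfold bCount
  have : vset k w F 0 =
      (univ.filter fun p : Fin k × Fin w => F p.1 p.2 = some false).image Prod.fst := by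
    ext i
    simp [vset]
  rw [this, Finset.card_image_of_injOn]
  rintro ⟨i, c⟩ h ⟨i', c'⟩ h' (e : i = i')
  subst e
  simp only [coe_filter, mem_univ, true_and, Set.mem_ofPred_eq] at h h'
  rcases lt_trichotomy c c' with h1 | h1 | h1
  · simp [hF.2.1 i c' c h' h1] at h
  · rw [h1]
  · simp [hF.2.1 i c c' h h1] at h'

lemma alpha_col {k w : ℕ} {lam : Fin k → ℕ} {F : Fin k → Fin w → Option Bool}
    (hF : IsCCT k w lam F) (c : Fin w) :
    (∃ i, F i c = some true) ↔ ∃ i, (c : ℕ) < lam i ∧ i ∉ vset k w F c := by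
  constructor
  · rintro ⟨i, hi⟩
    refine ⟨i, ?_, ?_⟩
    · by_contra h
      simp [hF.1 i c (by omega)] at hi
    · simp only [vset, mem_filter, mem_univ, true_and]
      rintro ⟨c', h1, h2⟩
      rcases lt_or_eq_of_le (show c ≤ c' from h1) with h | h
      · simp [hF.2.1 i c' c h2 h] at hi
      · subst h; simp [hi] at h2
  · rintro ⟨i, hi, hn⟩
    by_contra hno
    push Not at hno
    have hn' : ∀ c' : Fin w, (c : ℕ) ≤ c' → F i c' ≠ some false := by
      intro c' h h2
      exact hn (by simp only [vset, mem_filter, mem_univ, true_and]; exact ⟨c', h, h2⟩)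
    have h := hF.2.2.2 i c hi (fun i' _ => hno i') (fun c' h _ => hn' c' (le_of_lt h))
    rcases hv : F i c with _ | _ | _
    · exact h hv
    · exact hn' c le_rfl hv
    · exact hno i hv

lemma aCount_eq {k w : ℕ} {lam : Fin k → ℕ} {F : Fin k → Fin w → Option Bool}
    (hF : IsCCT k w lam F) :
    aCount k w F = (univ.filter fun c : Fin w => ∃ i, (c : ℕ) < lam i ∧ i ∉ vset k w F c).card := by
  unfold aCount
  have : (univ.filter fun c : Fin w => ∃ i, (c : ℕ) < lam i ∧ i ∉ vset k w F c) =
      (univ.filter fun p : Fin k × Fin w => F p.1 p.2 = some true).image Prod.snd := by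
    ext c
    simp only [mem_filter, mem_univ, true_and, mem_image, Prod.exists, exists_eq_right]
    rw [← alpha_col hF]
  rw [this, Finset.card_image_of_injOn]
  rintro ⟨i, c⟩ h ⟨i', c'⟩ h' (e : c = c')
  subst e
  simp only [coe_filter, mem_univ, true_and, Set.mem_ofPred_eq] at h h'
  rcases lt_trichotomy i i' with h1 | h1 | h1
  · simp [hF.2.2.1 i' i c h' h1] at h
  · rw [h1]
  · simp [hF.2.2.1 i i' c h h1] at h'

noncomputable def oset (k w : ℕ) (lam : Fin k → ℕ) (F : Fin k → Fin w → Option Bool) (c : Fin w) :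
    Finset (Fin k) :=
  univ.filter fun i : Fin k => (c : ℕ) < lam i ∧ ∀ c' : Fin w, c < c' → F i c' ≠ some false

noncomputable def sset (k w : ℕ) (F : Fin k → Fin w → Option Bool) (c : Fin w) :
    Finset (Fin k) :=
  univ.filter fun i : Fin k => F i c = some false

lemma sset_sub {k w : ℕ} {lam : Fin k → ℕ} {F : Fin k → Fin w → Option Bool}
    (hF : IsCCT k w lam F) (c : Fin w) : sset k w F c ⊆ oset k w lam F c := by
  intro i
  simp only [sset, oset, mem_filter, mem_univ, true_and]
  intro h
  refine ⟨?_, ?_⟩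
  · by_contra h2
    simp [hF.1 i c (by omega)] at h
  · intro c' h1 h2
    simp [hF.2.1 i c' c h2 h1] at h

lemma none_of_open {k w : ℕ} {lam : Fin k → ℕ} {F : Fin k → Fin w → Option Bool}
    (hF : IsCCT k w lam F) (c : Fin w) (i : Fin k) (hi : i ∈ oset k w lam F c)
    (h : F i c = none) : ∃ i', i < i' ∧ F i' c = some true := by
  simp only [oset, mem_filter, mem_univ, true_and] at hi
  by_contra hno
  push Not at hno
  exact hF.2.2.2 i c hi.1 hno (fun c' h _ => hi.2 c' h) h

lemma sset_upper {k w : ℕ} {lam : Fin k → ℕ} {F : Fin k → Fin w → Option Bool}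
    (hF : IsCCT k w lam F) (c : Fin w) :
    ∀ i ∈ sset k w F c, ∀ j ∈ oset k w lam F c, i < j → j ∈ sset k w F c := by
  intro i hi j hj hij
  simp only [sset, mem_filter, mem_univ, true_and] at hi ⊢
  rcases hv : F j c with _ | _ | _
  · obtain ⟨i', h1, h2⟩ := none_of_open hF c j hj hv
    simp [hF.2.2.1 i' i c h2 (hij.trans h1)] at hi
  · rfl
  · simp [hF.2.2.1 j i c hv hij] at hi

lemma alpha_char {k w : ℕ} {lam : Fin k → ℕ} {F : Fin k → Fin w → Option Bool}
    (hF : IsCCT k w lam F) (c : Fin w) (i : Fin k) :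
    F i c = some true ↔ i ∈ oset k w lam F c ∧ i ∉ sset k w F c ∧
      ∀ j ∈ oset k w lam F c, i < j → j ∈ sset k w F c := by
  constructor
  · intro h
    refine ⟨?_, ?_, ?_⟩
    · simp only [oset, mem_filter, mem_univ, true_and]
      refine ⟨?_, ?_⟩
      · by_contra h2
        simp [hF.1 i c (by omega)] at h
      · intro c' h1 h2
        simp [hF.2.1 i c' c h2 h1] at h
    · simp [sset, h]
    · intro j hj hij
      simp only [sset, mem_filter, mem_univ, true_and]
      rcases hv : F j c with _ | _ | _
      · obtain ⟨i', h1, h2⟩ := none_of_open hF c j hj hv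
        simp [hF.2.2.1 i' i c h2 (hij.trans h1)] at h
      · rfl
      · simp [hF.2.2.1 j i c hv hij] at h
  · rintro ⟨ho, hs, hall⟩
    rcases hv : F i c with _ | _ | _
    · obtain ⟨i', h1, h2⟩ := none_of_open hF c i ho hv
      have hi' : i' ∈ oset k w lam F c := by
        simp only [oset, mem_filter, mem_univ, true_and]
        refine ⟨?_, ?_⟩
        · by_contra h
          simp [hF.1 i' c (by omega)] at h2
        · intro c' h3 h4
          simp [hF.2.1 i' c' c h4 h3] at h2
      have := hall i' hi' h1
      simp [sset, h2] at this
    · exact absurd (by simp [sset, hv]) hs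
    · rfl

lemma vset_split {k w : ℕ} {lam : Fin k → ℕ} {F : Fin k → Fin w → Option Bool}
    (hF : IsCCT k w lam F) (c : Fin w) :
    (vset k w F c).card = (sset k w F c).card + (vset k w F (c + 1)).card := by
  rw [← Finset.card_union_of_disjoint]
  · congr 1
    ext i
    simp only [vset, sset, mem_union, mem_filter, mem_univ, true_and]
    constructor
    · rintro ⟨c', h1, h2⟩
      rcases eq_or_lt_of_le h1 with h | h
      · have : c = c' := Fin.ext h
        subst this
        exact Or.inl h2
      · exact Or.inr ⟨c', h, h2⟩
    · rintro (h | ⟨c', h1, h2⟩)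
      · exact ⟨c, le_rfl, h⟩
      · exact ⟨c', by omega, h2⟩
  · rw [Finset.disjoint_left]
    intro i h1 h2
    simp only [vset, sset, mem_filter, mem_univ, true_and] at h1 h2
    obtain ⟨c', h3, h4⟩ := h2
    simp [hF.2.1 i c' c h4 (by rw [Fin.lt_def]; omega)] at h1

lemma cct_unique {k w : ℕ} {lam : Fin k → ℕ} {F G : Fin k → Fin w → Option Bool}
    (hF : IsCCT k w lam F) (hG : IsCCT k w lam G)
    (hV : ∀ c : Fin w, (vset k w F c).card = (vset k w G c).card) : F = G := by
  have key : ∀ m : ℕ, ∀ c : Fin w, w ≤ m + c → ∀ i, F i c = G i c := by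
    intro m
    induction m with
    | zero => intro c hc; have := c.2; omega
    | succ m ih =>
      intro c hc i
      have ih' : ∀ c' : Fin w, c < c' → ∀ i, F i c' = G i c' := by
        intro c' h
        rw [Fin.lt_def] at h
        exact ih c' (by omega)
      have hO : oset k w lam F c = oset k w lam G c := by
        ext i
        simp only [oset, mem_filter, mem_univ, true_and]
        constructor
        · rintro ⟨h1, h2⟩
          exact ⟨h1, fun c' h => by rw [← ih' c' h]; exact h2 c' h⟩
        · rintro ⟨h1, h2⟩
          exact ⟨h1, fun c' h => by rw [ih' c' h]; exact h2 c' h⟩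
      have hV1 : vset k w F (c + 1) = vset k w G (c + 1) := by
        ext i
        simp only [vset, mem_filter, mem_univ, true_and]
        constructor
        · rintro ⟨c', h1, h2⟩
          exact ⟨c', h1, by rw [← ih' c' (by rw [Fin.lt_def]; omega)]; exact h2⟩
        · rintro ⟨c', h1, h2⟩
          exact ⟨c', h1, by rw [ih' c' (by rw [Fin.lt_def]; omega)]; exact h2⟩
      have hS : sset k w F c = sset k w G c := by
        apply upper_unique (oset k w lam F c) _ _ (sset_sub hF c) (hO ▸ sset_sub hG c)
        · have h1 := vset_split hF c
          have h2 := vset_split hG c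
          rw [hV c, hV1] at h1
          omega
        · exact sset_upper hF c
        · rw [hO]; exact sset_upper hG c
      have hA : F i c = some true ↔ G i c = some true := by
        rw [alpha_char hF, alpha_char hG, hO, hS]
      have hB : F i c = some false ↔ G i c = some false := by
        have : i ∈ sset k w F c ↔ i ∈ sset k w G c := by rw [hS]
        simpa [sset] using this
      rcases h1 : F i c with _ | _ | _ <;> rcases h2 : G i c with _ | _ | _ <;> simp_all
  funext i c
  exact key w c (by omega) i

lemma cct_exists {k : ℕ} (w : ℕ) : ∀ (lam : Fin k → ℕ) (V : ℕ → ℕ),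
    (∀ a b, a ≤ b → V b ≤ V a) → (∀ c, V c ≤ hh k lam c) → (V w = 0) →
    ∃ F, IsCCT k w lam F ∧ ∀ c, c ≤ w → (vset k w F c).card = V c := by
  induction w with
  | zero =>
    intro lam V _ _ h0
    refine ⟨fun _ _ => none, ⟨?_, ?_, ?_, ?_⟩, ?_⟩
    · intro i c; exact c.elim0
    · intro i c; exact c.elim0
    · intro i _ c; exact c.elim0
    · intro i c; exact c.elim0
    · intro c hc
      have : c = 0 := by omega
      subst this
      rw [h0]; simp [vset]
  | succ w ih =>
    intro lam V hanti hle h0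
    obtain ⟨F, hF, hV⟩ := ih (fun i => lam i - 1) (fun c => V (c + 1))
      (fun a b h => hanti _ _ (by omega)) (fun c => by
        refine (hle (c + 1)).trans (le_of_eq ?_)
        unfold hh
        congr 1
        ext i
        simp only [mem_filter, mem_univ, true_and]
        omega) h0
    have hR := hV 0 (by omega)
    have hRsub : vset k w F 0 ⊆ univ.filter fun i : Fin k => 0 < lam i := by
      intro i hi
      have := vset_sub hF 0 hi
      simp only [mem_filter, mem_univ, true_and] at this ⊢
      omega
    have h01 := hanti 0 1 (by omega)
    have hle0 := hle 0
    simp only [zero_add] at hR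
    obtain ⟨S, hSO, hSc, hSu⟩ := exists_upper ((univ.filter fun i : Fin k => 0 < lam i) \ vset k w F 0)
      (V 0 - V 1) (by
        rw [Finset.card_sdiff_of_subset hRsub, hR]
        unfold hh at hle0
        omega)
    have hO : ∀ i, i ∈ (univ.filter fun i : Fin k => 0 < lam i) \ vset k w F 0 ↔
        0 < lam i ∧ ∀ c, F i c ≠ some false := by
      intro i
      simp [vset]
    set O := (univ.filter fun i : Fin k => 0 < lam i) \ vset k w F 0 with hOdef
    let col : Fin k → Option Bool := fun i =>
      if i ∈ S then some false else if i ∈ O ∧ ∀ j ∈ O, i < j → j ∈ S then some true else none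
    have colF : ∀ i, col i = some false ↔ i ∈ S := by
      intro i; simp only [col]; split_ifs <;> simp_all
    have colT : ∀ i, col i = some true ↔ i ∉ S ∧ i ∈ O ∧ ∀ j ∈ O, i < j → j ∈ S := by
      intro i; simp only [col]; split_ifs <;> simp_all
    have colN : ∀ i, i ∉ O → col i = none := by
      intro i hi
      have : i ∉ S := fun h => hi (hSO h)
      simp [col, this, hi]
    refine ⟨fun i => Fin.cons (col i) (F i), ⟨?_, ?_, ?_, ?_⟩, ?_⟩
    · intro i c
      refine Fin.cases ?_ ?_ c
      · intro h
        simp only [Fin.cons_zero]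
        apply colN
        rw [hO]
        simp only [Fin.val_zero] at h
        omega
      · intro c h
        simp only [Fin.cons_succ]
        simp only [Fin.val_succ] at h
        exact hF.1 i c (by simp only; omega)
    · intro i c c'
      refine Fin.cases ?_ ?_ c
      · intro _ h; simp at h
      · intro c h1
        simp only [Fin.cons_succ] at h1
        refine Fin.cases ?_ ?_ c'
        · intro _
          simp only [Fin.cons_zero]
          apply colN
          rw [hO]
          exact fun h => h.2 c h1
        · intro c' h
          simp only [Fin.cons_succ]
          exact hF.2.1 i c c' h1 (Fin.succ_lt_succ_iff.mp h)
    · intro i i' c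
      refine Fin.cases ?_ ?_ c
      · simp only [Fin.cons_zero]
        intro h hlt
        rw [colT] at h
        rcases hv : col i' with _ | _ | _
        · rfl
        · rw [colF] at hv
          exact absurd (hSu i' hv i h.2.1 hlt) h.1
        · rw [colT] at hv
          exact absurd (hv.2.2 i h.2.1 hlt) h.1
      · intro c
        simp only [Fin.cons_succ]
        exact hF.2.2.1 i i' c
    · intro i c
      refine Fin.cases ?_ ?_ c
      · simp only [Fin.cons_zero]
        intro hl hs he hn
        have hiO : i ∈ O := by
          rw [hO]
          refine ⟨by simpa using hl, ?_⟩
          intro c h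
          have hc : (c : ℕ) < lam i - 1 := by
            by_contra h2
            simp [hF.1 i c (by simp only; omega)] at h
          have := he c.succ (Fin.succ_pos c) (by simp only [Fin.val_succ]; omega)
          simp only [Fin.cons_succ] at this
          exact this h
        by_cases hiS : i ∈ S
        · rw [(colF i).2 hiS] at hn; simp at hn
        · have hne : (O \ S).Nonempty := ⟨i, mem_sdiff.mpr ⟨hiO, hiS⟩⟩
          have hm := Finset.max'_mem _ hne
          have hle : i ≤ (O \ S).max' hne := Finset.le_max' _ _ (mem_sdiff.mpr ⟨hiO, hiS⟩)
          have hT : col ((O \ S).max' hne) = some true := by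
            rw [colT]
            rw [mem_sdiff] at hm
            refine ⟨hm.2, hm.1, ?_⟩
            intro j hj hlt
            by_contra hjS
            exact absurd (Finset.le_max' (O \ S) j (mem_sdiff.mpr ⟨hj, hjS⟩)) (not_le.mpr hlt)
          rcases lt_or_eq_of_le hle with h | h
          · exact hs _ h hT
          · rw [← h, hn] at hT; simp at hT
      · intro c
        simp only [Fin.cons_succ, Fin.val_succ]
        intro hl hs he
        refine hF.2.2.2 i c (by simp only; omega) hs ?_
        intro c' h1 h2
        simp only at h2
        have := he c'.succ (Fin.succ_lt_succ_iff.mpr h1) (by simp only [Fin.val_succ]; omega)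
        simpa using this
    · have hsucc : ∀ c, vset k (w + 1) (fun i => Fin.cons (col i) (F i)) (c + 1) = vset k w F c := by
        intro c
        ext i
        simp [vset, Fin.exists_fin_succ]
      intro c hc
      rcases c with _ | c
      · have : vset k (w + 1) (fun i => Fin.cons (col i) (F i)) 0 = S ∪ vset k w F 0 := by
          ext i
          simp [vset, Fin.exists_fin_succ, colF]
        rw [this, Finset.card_union_of_disjoint, hSc, hR]
        · omega
        · rw [Finset.disjoint_left]
          intro i h1 h2
          have := hSO h1
          rw [hOdef, mem_sdiff] at this
          exact this.2 h2
      · rw [hsucc, hV c (by omega)]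

lemma union_card (a l : ℕ → ℕ) (ha : Antitone a) (hl : Antitone l) (m : ℕ) :
    ((range (m + 1)).biUnion fun i => Ico (a i) (l i)).card =
      (l 0 - a 0) + ∑ t ∈ range m, (min (a t) (l (t + 1)) - a (t + 1)) := by
  induction m with
  | zero => simp
  | succ m ih =>
    rw [Finset.sum_range_succ, ← add_assoc, ← ih, ← Nat.card_Ico,
      ← Finset.card_union_of_disjoint]
    · congr 1
      ext c
      simp only [mem_biUnion, mem_union, mem_range, mem_Ico]
      constructor
      · rintro ⟨i, hi, h1, h2⟩
        by_cases him : i < m + 1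
        · exact Or.inl ⟨i, him, h1, h2⟩
        · have : i = m + 1 := by omega
          subst this
          by_cases hc : a m ≤ c
          · have := hl (show m ≤ m + 1 by omega)
            exact Or.inl ⟨m, by omega, hc, by omega⟩
          · right; omega
      · rintro (⟨i, hi, h1, h2⟩ | h)
        · exact ⟨i, by omega, h1, h2⟩
        · exact ⟨m + 1, by omega, by omega, by omega⟩
    · rw [Finset.disjoint_left]
      intro c h1 h2
      simp only [mem_biUnion, mem_range, mem_Ico] at h1 h2
      obtain ⟨i, hi, h3, h4⟩ := h1
      have := ha (show i ≤ m by omega)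
      omega

lemma pathAlpha_eq (k w : ℕ) (lam C : Fin k → ℕ)
    (hmono : ∀ i j : Fin k, i ≤ j → lam j ≤ lam i) (hbd : ∀ i, lam i ≤ w)
    (hC : IsCatalanPath k lam C) : pathAlphaCount k lam C =
      (univ.filter fun c : Fin w => ∃ i, (c : ℕ) < lam i ∧ ¬ (c : ℕ) < C i).card := by
  have anti : ∀ f : Fin k → ℕ, (∀ i j : Fin k, i ≤ j → f j ≤ f i) →
      Antitone (fun t => if h : t < k then f ⟨t, h⟩ else 0) := by
    intro f hf s t hst
    by_cases ht : t < k
    · have hs : s < k := by omega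
      simp only [ht, hs, dif_pos]
      exact hf _ _ hst
    · simp [ht]
  unfold pathAlphaCount
  simp only
  rw [← union_card _ _ (anti C hC.1) (anti lam hmono) k]
  rw [← Finset.card_map Fin.valEmbedding]
  congr 1
  ext c
  simp only [mem_biUnion, mem_range, mem_Ico, mem_map, mem_filter, mem_univ, true_and,
    Fin.valEmbedding_apply]
  constructor
  · rintro ⟨i, hi, h1, h2⟩
    by_cases hik : i < k
    · simp only [hik, dif_pos] at h1 h2
      exact ⟨⟨c, h2.trans_le (hbd _)⟩, ⟨⟨i, hik⟩, h2, not_lt.mpr h1⟩, rfl⟩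
    · simp [hik] at h2
  · rintro ⟨c', ⟨i, h1, h2⟩, rfl⟩
    refine ⟨i, by omega, ?_, ?_⟩
    · simp only [i.2, dif_pos]; exact not_lt.mp h2
    · simp only [i.2, dif_pos]; exact h1

noncomputable def toC (k w : ℕ) (F : Fin k → Fin w → Option Bool) (i : Fin k) : ℕ :=
  (univ.filter fun c : Fin w => (i : ℕ) < (vset k w F c).card).card

lemma toC_lt {k w : ℕ} (F : Fin k → Fin w → Option Bool) (i : Fin k) (c : Fin w) :
    (c : ℕ) < toC k w F i ↔ (i : ℕ) < (vset k w F c).card := by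
  unfold toC
  exact downclosed_card (fun c : Fin w => (i : ℕ) < (vset k w F c).card)
    (fun a b h h2 => h2.trans_le (Finset.card_le_card (vset_anti F h))) c

lemma toC_path {k w : ℕ} {lam : Fin k → ℕ} (hmono : ∀ i j : Fin k, i ≤ j → lam j ≤ lam i)
    {F : Fin k → Fin w → Option Bool} (hF : IsCCT k w lam F) :
    IsCatalanPath k lam (toC k w F) := by
  constructor
  · intro i j hij
    apply Finset.card_le_card
    intro c
    simp only [mem_filter, mem_univ, true_and]
    intro h
    exact lt_of_le_of_lt hij h
  · intro i
    by_contra hlt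
    push Not at hlt
    have hw : toC k w F i ≤ w := by
      unfold toC
      exact (Finset.card_le_univ _).trans (by simp)
    have h1 := (toC_lt F i ⟨lam i, by omega⟩).1 hlt
    have h2 := h1.trans_le (vset_le hF _)
    have h3 := (downclosed_card (fun j : Fin k => lam i < lam j)
      (fun a b h h2 => h2.trans_le (hmono a b h)) i).1 h2
    omega

lemma vset_toC {k w : ℕ} (F : Fin k → Fin w → Option Bool) (c : Fin w) :
    (vset k w F c).card = (univ.filter fun i : Fin k => (c : ℕ) < toC k w F i).card := by
  simp only [toC_lt]
  rw [card_fin_lt]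
  exact (Finset.card_le_univ _).trans (by simp)

lemma path_beta {k w : ℕ} {lam : Fin k → ℕ} {F : Fin k → Fin w → Option Bool}
    (hF : IsCCT k w lam F) : pathBetaCount k (toC k w F) = bCount k w F := by
  rw [bCount_eq hF]
  unfold pathBetaCount
  rcases w with _ | w
  · simp [toC, vset]
  · exact (vset_toC F 0).symm

lemma path_alpha {k w : ℕ} {lam : Fin k → ℕ} (hmono : ∀ i j : Fin k, i ≤ j → lam j ≤ lam i)
    (hbd : ∀ i, lam i ≤ w) {F : Fin k → Fin w → Option Bool}
    (hF : IsCCT k w lam F) : pathAlphaCount k lam (toC k w F) = aCount k w F := by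
  rw [aCount_eq hF, pathAlpha_eq k w lam _ hmono hbd (toC_path hmono hF)]
  congr 1
  ext c
  simp only [mem_filter, mem_univ, true_and]
  have aux : ∀ A : Finset (Fin k), A ⊆ (univ.filter fun i : Fin k => (c : ℕ) < lam i) →
      ((∃ i, (c : ℕ) < lam i ∧ i ∉ A) ↔ A.card < hh k lam c) := by
    intro A hA
    constructor
    · rintro ⟨i, h1, h2⟩
      apply Finset.card_lt_card
      refine (Finset.ssubset_iff_of_subset hA).2 ⟨i, by simpa using h1, h2⟩
    · intro h
      obtain ⟨i, h1, h2⟩ := Finset.exists_mem_notMem_of_card_lt_card h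
      exact ⟨i, by simpa using h1, h2⟩
  rw [aux _ (vset_sub hF c), vset_toC, ← aux]
  · simp
  · intro i
    simp only [mem_filter, mem_univ, true_and]
    intro h
    exact h.trans_le ((toC_path hmono hF).2 i)

/-- There is a bijection `φ` between Condensed Catalan tableaux of shape `lam`
(of size `(k,n)`) and Catalan paths constrained by `lam`, such that for every
tableau `T` with `j` α's and `ℓ` β's in its filling, the weight of the path `φ T`
is `α^j β^ℓ`; in particular, multiplying both sides by the boundary factor
`α^k β^(n-k)`, the bijection is weight-preserving. -/
theorem stmt0 (n k : ℕ) (hk : 1 ≤ k) (hkn : k ≤ n) (lam : Fin k → ℕ)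
    (hmono : ∀ i j : Fin k, i ≤ j → lam j ≤ lam i) (hbd : ∀ i, lam i ≤ n - k) :
    ∃ φ : {F : Fin k → Fin (n - k) → Option Bool // IsCCT k (n - k) lam F} ≃
          {C : Fin k → ℕ // IsCatalanPath k lam C},
      ∀ T, pathWeight k lam (φ T).1
              = MvPolynomial.X 0 ^ aCount k (n - k) T.1 * MvPolynomial.X 1 ^ bCount k (n - k) T.1
        ∧ (MvPolynomial.X 0 : MvPolynomial (Fin 2) ℤ) ^ k * MvPolynomial.X 1 ^ (n - k) *
              pathWeight k lam (φ T).1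
            = MvPolynomial.X 0 ^ (k + aCount k (n - k) T.1) *
                MvPolynomial.X 1 ^ ((n - k) + bCount k (n - k) T.1) := by
  have hbij : Function.Bijective (fun T : {F : Fin k → Fin (n - k) → Option Bool // IsCCT k (n - k) lam F} =>
      (⟨toC k (n - k) T.1, toC_path hmono T.2⟩ : {C : Fin k → ℕ // IsCatalanPath k lam C})) := by
    constructor
    · rintro ⟨F, hF⟩ ⟨G, hG⟩ h
      have h' : toC k (n - k) F = toC k (n - k) G := congrArg Subtype.val h
      apply Subtype.ext
      apply cct_unique hF hG
      intro c
      rw [vset_toC, vset_toC, h']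
    · rintro ⟨C, hC⟩
      have hCw : ∀ i, C i ≤ n - k := fun i => (hC.2 i).trans (hbd i)
      obtain ⟨F, hF, hV⟩ := cct_exists (n - k) lam (hh k C)
        (by
          intro a b hab
          apply Finset.card_le_card
          intro i
          simp only [mem_filter, mem_univ, true_and]
          omega)
        (by
          intro c
          apply Finset.card_le_card
          intro i
          simp only [mem_filter, mem_univ, true_and]
          have := hC.2 i
          omega)
        (by
          unfold hh
          rw [Finset.card_eq_zero, Finset.filter_eq_empty_iff]
          intro i _
          exact not_lt.mpr (hCw i))
      refine ⟨⟨F, hF⟩, ?_⟩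
      apply Subtype.ext
      funext i
      change toC k (n - k) F i = C i
      rw [← card_fin_lt (n - k) (C i) (hCw i)]
      unfold toC
      congr 1
      ext c
      simp only [mem_filter, mem_univ, true_and]
      rw [hV c (by omega)]
      exact downclosed_card (fun j : Fin k => (c : ℕ) < C j)
        (fun a b h h2 => h2.trans_le (hC.1 a b h)) i
  refine ⟨Equiv.ofBijective _ hbij, ?_⟩
  rintro ⟨F, hF⟩
  have hw : pathWeight k lam ((Equiv.ofBijective _ hbij) ⟨F, hF⟩).1 =
      MvPolynomial.X 0 ^ aCount k (n - k) F * MvPolynomial.X 1 ^ bCount k (n - k) F := by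
    change pathWeight k lam (toC k (n - k) F) = _
    unfold pathWeight
    rw [path_alpha hmono hbd hF, path_beta hF]
  refine ⟨hw, ?_⟩
  rw [hw]
  ring
end

section
/- (Narayana) Let k ≥ 1 and let λ_1 ≥ λ_2 ≥ ⋯ ≥ λ_k ≥ 0 be integers. The number of integer sequences (C_1, …, C_k) satisfying C_1 ≥ C_2 ≥ ⋯ ≥ C_k ≥ 0 and C_i ≤ λ_i for all i (equivalently, the number of south/west lattice paths from the northeast to the southwest corner of the bounding rectangle that stay weakly northwest of the southeast border of the Young diagram of λ) equals the determinant of the k × k integer matrix A_λ with entries (A_λ)_{ij} = binom(λ_j + 1, j − i + 1) for 1 ≤ i, j ≤ k, where binom(a,b) = 0 whenever b < 0 or b > a. -/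
open scoped Classical
open Finset

/-- The binomial coefficient `binom a b` for integer arguments, with the convention
that it vanishes whenever `b < 0` or `b > a`. -/
def icho (a b : ℤ) : ℤ := if 0 ≤ b ∧ b ≤ a then ((a.toNat).choose b.toNat : ℤ) else 0

def pathF (L : ℕ → ℕ) : ℕ → ℕ → ℤ
  | 0, _ => 1
  | k + 1, m => ∑ c ∈ Finset.Icc m (L k), pathF L k c

lemma pathF_key (L : ℕ → ℕ) (hL : Antitone L) (m : ℕ) :
    ∀ n k : ℕ, (k = 0 ∨ m + n ≤ L (k - 1) + 1) →
      ∑ r ∈ Finset.range (k + 1), (-1 : ℤ) ^ r * (n.choose r : ℤ) * pathF L (k - r) m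
        = pathF L k (m + n) := by
  intro n
  induction n with
  | zero =>
    intro k _
    rw [Finset.sum_range_succ']
    simp
  | succ n ih =>
    intro k hk
    rcases k with _ | k
    · simp [pathF]
    · have hk' : m + n ≤ L k := by
        rcases hk with h | h
        · omega
        · simp at h; omega
      have h1 := ih (k + 1) (Or.inr (by simp; omega))
      have h2 := ih k (by
        rcases k with _ | k
        · simp
        · right
          have := hL (Nat.le_succ k)
          simp at this ⊢
          omega)
      have h3 : pathF L (k + 1) (m + n) = pathF L k (m + n) + pathF L (k + 1) (m + (n + 1)) := by
        simp only [pathF]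
        rw [← Finset.insert_Icc_succ_left_eq_Icc hk', Finset.sum_insert (by simp)]
        rfl
      rw [Finset.sum_range_succ'] at h1 ⊢
      have h4 : ∑ r ∈ Finset.range (k + 1), (-1 : ℤ) ^ (r + 1) * ((n + 1).choose (r + 1) : ℤ)
            * pathF L (k + 1 - (r + 1)) m
          = ∑ r ∈ Finset.range (k + 1), (-1 : ℤ) ^ (r + 1) * (n.choose (r + 1) : ℤ)
            * pathF L (k + 1 - (r + 1)) m
          - ∑ r ∈ Finset.range (k + 1), (-1 : ℤ) ^ r * (n.choose r : ℤ) * pathF L (k - r) m := by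
        rw [← Finset.sum_sub_distrib]
        refine Finset.sum_congr rfl fun r _ => ?_
        rw [Nat.choose_succ_succ, Nat.add_sub_add_right]
        push_cast
        ring
      rw [h4]
      simp only [Nat.choose_zero_right] at h1 ⊢
      linarith

lemma pathF_zero (L : ℕ → ℕ) (hL : Antitone L) (j : ℕ) :
    ∑ i ∈ Finset.range (j + 2), (-1 : ℤ) ^ i * ((L j + 1).choose (j + 1 - i) : ℤ) * pathF L i 0
      = 0 := by
  have h := pathF_key L hL 0 (L j + 1) (j + 1) (Or.inr (by simp))
  have h0 : pathF L (j + 1) (0 + (L j + 1)) = 0 := by simp [pathF]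
  rw [h0, ← Finset.sum_range_reflect] at h
  have : ∑ i ∈ Finset.range (j + 2), (-1 : ℤ) ^ i * ((L j + 1).choose (j + 1 - i) : ℤ) * pathF L i 0
     = (-1) ^ (j + 1) * 0 := by
    rw [← h, Finset.mul_sum]
    refine Finset.sum_congr rfl fun i hi => ?_
    rw [Finset.mem_range] at hi
    obtain ⟨d, hd⟩ : ∃ d, j + 1 = i + d := ⟨j + 1 - i, by omega⟩
    have e1 : j + 1 + 1 - 1 - i = d := by omega
    have e2 : j + 1 - i = d := by omega
    have e3 : j + 1 - d = i := by omega
    rw [e1, e2, e3, hd, pow_add]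
    have : ((-1 : ℤ) ^ d) * (-1) ^ d = 1 := by rw [← mul_pow]; simp
    linear_combination (-(-1 : ℤ) ^ i * ((L j + 1).choose d : ℤ) * pathF L i 0) * this
  simpa using this

def PathS (L : ℕ → ℕ) (k m : ℕ) : Type :=
  {C : Fin k → ℕ // (∀ i j : Fin k, i ≤ j → C j ≤ C i) ∧ (∀ i, C i ≤ L i) ∧ ∀ i, m ≤ C i}

lemma PathS_ext (L : ℕ → ℕ) (k m : ℕ) (p q : Σ c : Finset.Icc m (L k), PathS L k c)
    (h : p.1.1 = q.1.1) (h' : p.2.1 = q.2.1) : p = q := by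
  obtain ⟨⟨c, hc⟩, C⟩ := p
  obtain ⟨⟨d, hd⟩, D⟩ := q
  obtain rfl : c = d := h
  obtain rfl : C = D := Subtype.ext h'
  rfl

def pathEquiv (L : ℕ → ℕ) (k m : ℕ) :
    PathS L (k + 1) m ≃ Σ c : Finset.Icc m (L k), PathS L k c where
  toFun C := ⟨⟨C.1 (Fin.last k), Finset.mem_Icc.2 ⟨C.2.2.2 _, by simpa using C.2.2.1 (Fin.last k)⟩⟩,
    ⟨fun i => C.1 i.castSucc, fun i j h => C.2.1 _ _ (by simpa using h),
      fun i => by simpa using C.2.2.1 i.castSucc, fun i => C.2.1 _ _ (Fin.le_last _)⟩⟩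
  invFun p := ⟨Fin.snoc (α := fun _ => ℕ) p.2.1 p.1.1, by
    obtain ⟨⟨c, hc⟩, ⟨C, h1, h2, h3⟩⟩ := p
    rw [Finset.mem_Icc] at hc
    simp only at h3
    refine ⟨?_, ?_, ?_⟩
    · intro i j
      induction i using Fin.lastCases with
      | last =>
        induction j using Fin.lastCases with
        | last => simp
        | cast j => intro h; exact absurd h (by simp [Fin.castSucc_lt_last])
      | cast i =>
        induction j using Fin.lastCases with
        | last => simpa using fun _ => h3 i
        | cast j => simpa using h1 i j
    · intro i
      induction i using Fin.lastCases with
      | last => simpa using hc.2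
      | cast i => simpa using h2 i
    · intro i
      induction i using Fin.lastCases with
      | last => simpa using hc.1
      | cast i => simpa using hc.1.trans (h3 i)⟩
  left_inv C := by
    apply Subtype.ext
    funext i
    induction i using Fin.lastCases with
    | last => simp
    | cast i => simp
  right_inv p := by
    apply PathS_ext
    · simp
    · funext i
      simp

lemma path_card (L : ℕ → ℕ) : ∀ k m : ℕ,
    Finite (PathS L k m) ∧ (Nat.card (PathS L k m) : ℤ) = pathF L k m := by
  intro k
  induction k with
  | zero =>
    intro m
    have : Unique (PathS L 0 m) :=
      { default := ⟨fun i => i.elim0, fun i => i.elim0, fun i => i.elim0, fun i => i.elim0⟩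
        uniq := fun a => Subtype.ext (funext fun i => i.elim0) }
    exact ⟨inferInstance, by simp [pathF]⟩
  | succ k ih =>
    intro m
    have : ∀ c, Finite (PathS L k c) := fun c => (ih c).1
    refine ⟨Finite.of_equiv _ (pathEquiv L k m).symm, ?_⟩
    rw [Nat.card_congr (pathEquiv L k m), Nat.card_sigma]
    push_cast
    simp only [(ih _).2, pathF]
    exact Finset.sum_coe_sort (Finset.Icc m (L k)) (fun c => pathF L k c)

lemma icho_eq (a i j : ℕ) : icho ((a : ℤ) + 1) ((j : ℤ) - (i : ℤ) + 1)
    = if i ≤ j + 1 then ((a + 1).choose (j + 1 - i) : ℤ) else 0 := by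
  unfold icho
  by_cases h : i ≤ j + 1
  · have e1 : ((a : ℤ) + 1).toNat = a + 1 := by omega
    have e2 : ((j : ℤ) - i + 1).toNat = j + 1 - i := by omega
    rw [if_pos h, e1, e2]
    split_ifs with h'
    · rfl
    · rw [Nat.choose_eq_zero_of_lt (by omega)]; rfl
  · rw [if_neg h, if_neg (by omega)]

lemma det_path (L : ℕ → ℕ) (hL : Antitone L) (n : ℕ) :
    Matrix.det (Matrix.of fun i j : Fin (n + 1) =>
      if (i : ℕ) ≤ j + 1 then ((L j + 1).choose (j + 1 - i) : ℤ) else 0) = pathF L (n + 1) 0 := by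
  set A : Matrix (Fin (n + 1)) (Fin (n + 1)) ℤ := Matrix.of fun i j : Fin (n + 1) =>
      if (i : ℕ) ≤ j + 1 then ((L j + 1).choose (j + 1 - i) : ℤ) else 0 with hA
  have h := Matrix.det_updateRow_sum A 0 (fun i => (-1 : ℤ) ^ (i : ℕ) * pathF L i 0)
  have hrow : (∑ i : Fin (n + 1), ((-1 : ℤ) ^ (i : ℕ) * pathF L i 0) • A i)
      = Pi.single (Fin.last n) ((-1) ^ n * pathF L (n + 1) 0) := by
    funext j
    have hz := pathF_zero L hL j
    have hs : (∑ i : Fin (n + 1), ((-1 : ℤ) ^ (i : ℕ) * pathF L i 0) • A i) j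
       = ∑ i ∈ Finset.range (n + 1), ((-1 : ℤ) ^ i * pathF L i 0) *
          (if i ≤ (j : ℕ) + 1 then ((L j + 1).choose (j + 1 - i) : ℤ) else 0) := by
      rw [Finset.sum_apply, Finset.sum_range]
      rfl
    rw [hs]
    induction j using Fin.lastCases with
    | last =>
      rw [Finset.sum_range_succ] at hz
      simp only [Fin.val_last, Pi.single_eq_same] at hz ⊢
      have : ∑ i ∈ Finset.range (n + 1), ((-1 : ℤ) ^ i * pathF L i 0) *
          (if i ≤ n + 1 then ((L n + 1).choose (n + 1 - i) : ℤ) else 0)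
          = ∑ i ∈ Finset.range (n + 1),
            (-1 : ℤ) ^ i * ((L n + 1).choose (n + 1 - i) : ℤ) * pathF L i 0 := by
        refine Finset.sum_congr rfl fun i hi => ?_
        rw [Finset.mem_range] at hi
        rw [if_pos (by omega)]
        ring
      rw [this]
      simp [pow_succ] at hz ⊢
      linarith
    | cast j =>
      have hj : (j : ℕ) < n := j.2
      rw [Pi.single_eq_of_ne (Fin.castSucc_lt_last j).ne]
      refine Eq.trans ?_ hz
      simp only [Fin.val_castSucc]
      symm
      have hsub : Finset.range ((j : ℕ) + 2) ⊆ Finset.range (n + 1) :=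
        Finset.range_subset_range.2 (by omega)
      rw [← Finset.sum_subset hsub]
      · refine Finset.sum_congr rfl fun i hi => ?_
        rw [Finset.mem_range] at hi
        rw [if_pos (by omega)]
        ring
      · intro i _ hi
        rw [Finset.mem_range] at hi
        rw [if_neg (by omega), mul_zero]
  rw [hrow] at h
  simp only [Fin.val_zero, pow_zero, pathF, one_mul, one_smul] at h
  rw [← h, Matrix.det_succ_row_zero, Finset.sum_eq_single (Fin.last n)]
  · have hm : ((A.updateRow 0 (Pi.single (Fin.last n) ((-1) ^ n * pathF L (n + 1) 0))).submatrix
        Fin.succ (Fin.last n).succAbove).det = 1 := by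
      rw [Matrix.det_of_isUpperTriangular]
      · apply Finset.prod_eq_one
        intro i _
        simp [Matrix.updateRow_apply, hA, Fin.succ_ne_zero]
      · intro i j hij
        simp only [id] at hij
        have : (j : ℕ) < i := hij
        simp [Matrix.updateRow_apply, hA, Fin.succ_ne_zero]
        intro h'
        omega
    simp only [pathF] at hm
    rw [hm]
    simp [pathF]
    rw [← mul_assoc, ← mul_pow]
    simp
  · intro b _ hb
    simp [Pi.single_eq_of_ne hb]
  · simp

/-- (Narayana) The number of lattice paths on the Young diagram of
`lam = (lam 0 ≥ lam 1 ≥ ⋯ ≥ lam (k-1) ≥ 0)`, i.e. of sequences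
`C 0 ≥ C 1 ≥ ⋯ ≥ C (k-1) ≥ 0` with `C i ≤ lam i` for all `i`, equals the determinant
of the `k × k` matrix whose `(i,j)` entry is `binom (lam j + 1) (j - i + 1)`. -/
theorem stmt1 (k : ℕ) (hk : 1 ≤ k) (lam : Fin k → ℕ)
    (hmono : ∀ i j : Fin k, i ≤ j → lam j ≤ lam i) :
    (Nat.card {C : Fin k → ℕ // (∀ i j : Fin k, i ≤ j → C j ≤ C i) ∧ ∀ i, C i ≤ lam i} : ℤ)
      = Matrix.det (Matrix.of fun i j : Fin k =>
          icho ((lam j : ℤ) + 1) ((j : ℤ) - (i : ℤ) + 1)) := by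
  obtain ⟨n, rfl⟩ : ∃ n, k = n + 1 := ⟨k - 1, by omega⟩
  obtain ⟨L, hL, hlam⟩ : ∃ L : ℕ → ℕ, Antitone L ∧ ∀ i : Fin (n + 1), lam i = L i := by
    refine ⟨fun i => if h : i < n + 1 then lam ⟨i, h⟩ else 0, ?_, ?_⟩
    · intro a b hab
      by_cases hb : b < n + 1
      · have ha : a < n + 1 := by omega
        simp only [ha, hb, dif_pos]
        exact hmono _ _ hab
      · simp [hb]
    · intro i
      simp only [i.2, dif_pos]
  simp only [hlam, icho_eq]
  rw [det_path L hL n, ← (path_card L (n + 1) 0).2]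
  congr 1
  refine Nat.card_congr (Equiv.subtypeEquivRight fun C => ?_)
  simp
end

section
/- Fix integers n ≥ k ≥ 1 and a partition λ = (λ_1 ≥ λ_2 ≥ ⋯ ≥ λ_k ≥ 0) with λ_1 ≤ n−k, and set λ_{k+1} = 0. The weight generating function P_λ(α,β) = Σ_T wt(T), summed over all Condensed Catalan tableaux T of shape λ and size (k,n), satisfies P_λ(α,β) = α^k β^{n−k} · det A_λ^{α,β}, where A_λ^{α,β} is the k × k matrix with entries (for 1 ≤ i, j ≤ k) A_{ij} = β^{j−i} α^{λ_i−λ_{j+1}} ( binom(λ_{j+1}, j−i) + β·binom(λ_{j+1}, j−i+1) ) + β^{j−i} α^{λ_i−λ_j} Σ_{ℓ=0}^{λ_j−λ_{j+1}−1} α^ℓ ( binom(λ_j−ℓ−1, j−i−1) + β·binom(λ_j−ℓ−1, j−i) ), the entries being interpreted in the Laurent polynomial ring ℤ[α, α^{−1}, β, β^{−1}] (every entry in fact lies in ℤ[α,β]: for i = j+1 the entry equals 1 and for i > j+1 it equals 0), with binom(a,b) = 0 whenever b < 0 or b > a. -/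
open scoped Classical
open Finset

/-- The fraction field of `ℤ[α,β]`, in which the Laurent polynomial ring
`ℤ[α,α⁻¹,β,β⁻¹]` embeds. -/
abbrev KF := FractionRing (MvPolynomial (Fin 2) ℤ)

/-- The indeterminate α, viewed in the fraction field. -/
noncomputable def aK : KF := algebraMap (MvPolynomial (Fin 2) ℤ) KF (MvPolynomial.X 0)

/-- The indeterminate β, viewed in the fraction field. -/
noncomputable def bK : KF := algebraMap (MvPolynomial (Fin 2) ℤ) KF (MvPolynomial.X 1)

section alg
variable {K : Type*} [Field K]

theorem hess_det (n : ℕ) (A : Matrix (Fin (n+1)) (Fin (n+1)) K) (D : ℕ → K)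
    (hD : D (n+1) = 1) (h0 : ∀ i j : Fin (n+1), (j:ℕ) + 1 < i → A i j = 0)
    (h1 : ∀ i j : Fin (n+1), (j:ℕ) + 1 = i → A i j = 1)
    (hrec : ∀ i : Fin (n+1), D i = ∑ j : Fin (n+1),
      if (i:ℕ) ≤ j then (-1)^((j:ℕ) - i) * A i j * D (j+1) else 0) :
    A.det = D 0 := by
  set u : Fin (n+1) → K := fun j => (-1)^(j:ℕ) * D (j+1) with hu
  have hAu : A.mulVec u = Pi.single 0 (D 0) := by
    funext i
    have e1 : A.mulVec u i = (-1)^(i:ℕ) * D i +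
        ∑ j : Fin (n+1), if (j:ℕ) + 1 = i then (-1)^(j:ℕ) * D (j+1) else 0 := by
      rw [hrec i, Finset.mul_sum, ← Finset.sum_add_distrib]
      simp only [Matrix.mulVec, dotProduct]
      refine Finset.sum_congr rfl fun j _ => ?_
      by_cases h : (i:ℕ) ≤ j
      · rw [if_pos h, if_neg (by omega)]
        obtain ⟨e, he⟩ := Nat.exists_eq_add_of_le h
        simp only [hu, he, Nat.add_sub_cancel_left, pow_add]
        have : ((-1:K)^(i:ℕ)) * (-1)^(i:ℕ) = 1 := by rw [← mul_pow]; simp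
        ring
      · rw [if_neg h]
        by_cases h' : (j:ℕ) + 1 = i
        · rw [if_pos h', h1 _ _ h']; simp [hu]
        · rw [if_neg h', h0 _ _ (by omega)]; simp
    rw [e1]
    by_cases hi : i = 0
    · subst hi; simp
    · have hi' : (i:ℕ) ≠ 0 := fun h => hi (Fin.ext h)
      rw [Pi.single_eq_of_ne hi, Finset.sum_eq_single (⟨i - 1, by omega⟩ : Fin (n+1))]
      · have : (i:ℕ) - 1 + 1 = i := by omega
        simp only [this, if_true]
        nth_rewrite 1 [← this]
        rw [pow_succ]; ring
      · intro b _ hb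
        rw [if_neg]
        intro h; apply hb; apply Fin.ext; simp; omega
      · simp
  have key : A.adjugate.mulVec (A.mulVec u) = A.det • u := by
    rw [Matrix.mulVec_mulVec, Matrix.adjugate_mul, Matrix.smul_mulVec, Matrix.one_mulVec]
  have k2 := congrFun key (Fin.last n)
  rw [hAu] at k2
  simp only [Matrix.mulVec_single, Pi.smul_apply, hu, smul_eq_mul, Fin.val_last, hD, mul_one,
    Matrix.col_apply, MulOpposite.smul_eq_mul_unop, MulOpposite.unop_op] at k2
  rw [Matrix.adjugate_fin_succ_eq_det_submatrix] at k2
  have hU : (A.submatrix (Fin.succAbove 0) (Fin.succAbove (Fin.last n))).det = 1 := by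
    rw [Matrix.det_of_isUpperTriangular]
    · apply Finset.prod_eq_one
      intro i _
      apply h1; simp
    · intro i j hij
      apply h0
      simp at hij ⊢
      omega
  rw [hU] at k2
  simp at k2
  have hne : ((-1:K)^n) ≠ 0 := by simp
  have := mul_right_cancel₀ hne (k2.symm.trans (mul_comm _ _))
  exact this

/-- choose d-1 -/
def cp (K : Type*) [Field K] (n : ℕ) : ℕ → K
  | 0 => 0
  | d+1 => (n.choose d : K)

def cbx (b : K) (p d : ℕ) : K := (p.choose d : K) + b * (p.choose (d+1) : K)
def cbm (b : K) (p d : ℕ) : K := cp K p d + b * (p.choose d : K)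

def gg (b x : K) (p : ℕ) : ℕ → ℕ → K
  | 0 => fun r => b * x^r
  | d+1 => fun r => x^r * cbx b p d - (p.choose d : K) - ∑ s ∈ range r, gg b x p d (s+1)

theorem gg_zero (b x : K) (p d : ℕ) : gg b x p d 0 = b * (p.choose d : K) := by
  cases d <;> simp [gg, cbx]

theorem gg_pascal (b x : K) (p d : ℕ) : ∀ r, gg b x (p+1) (d+1) r = gg b x p (d+1) r + gg b x p d r := by
  induction d with
  | zero => intro r; simp [gg, cbx]; ring
  | succ d ih =>
    intro r
    have h1 : gg b x (p+1) (d+1+1) r = x^r * cbx b (p+1) (d+1) - ((p+1).choose (d+1) : K) - ∑ s ∈ range r, gg b x (p+1) (d+1) (s+1) := rfl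
    have h2 : gg b x p (d+1+1) r = x^r * cbx b p (d+1) - (p.choose (d+1) : K) - ∑ s ∈ range r, gg b x p (d+1) (s+1) := rfl
    have h3 : gg b x p (d+1) r = x^r * cbx b p d - (p.choose d : K) - ∑ s ∈ range r, gg b x p d (s+1) := rfl
    rw [h1, h2, h3]
    simp only [ih, Finset.sum_add_distrib, cbx, Nat.choose_succ_succ]
    push_cast; ring

theorem gg_step (b x : K) (p d r : ℕ) :
    ∑ s ∈ range (r+1), gg b x (p+1) d (s+1) - ∑ s ∈ range r, gg b x p d (s+1)
      = x^(r+1) * cbm b p d - cp K p d := by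
  cases d with
  | zero => simp [gg, cbm, cp, Finset.sum_range_succ, mul_comm]
  | succ d =>
    simp only [gg_pascal, Finset.sum_add_distrib]
    rw [Finset.sum_range_succ]
    have h3 : gg b x p (d+1) (r+1) = x^(r+1) * cbx b p d - (p.choose d : K) - ∑ s ∈ range (r+1), gg b x p d (s+1) := rfl
    rw [h3]
    simp only [cbm, cp, cbx]; ring

def CC (b x : K) (p δ d : ℕ) : K := cbx b p d + ∑ e ∈ range δ, x^(e+1) * cbm b (p+e) d

theorem gg_main (b x : K) (p d r : ℕ) : ∀ δ, 
    ((p+δ).choose d : K) + ∑ s ∈ range (r+δ), gg b x (p+δ) d (s+1)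
      = CC b x p δ d * x^r - gg b x p (d+1) r := by
  intro δ
  induction δ with
  | zero => simp [CC, gg]; ring
  | succ δ ih =>
    have h := gg_step b x (p+δ) d (r+δ)
    have hc : ((p+δ+1).choose d : K) = (p+δ).choose d + cp K (p+δ) d := by
      cases d <;> simp [cp, Nat.choose_succ_succ, add_comm]
    have hC : CC b x p (δ+1) d = CC b x p δ d + x^(δ+1) * cbm b (p+δ) d := by
      simp [CC, Finset.sum_range_succ]; ring
    rw [← add_assoc, ← add_assoc, hc, hC]
    have : x^(r+δ+1) = x^(δ+1) * x^r := by ring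
    rw [this] at h
    linear_combination ih + h

/-- transfer functional -/
def VV (b : K) : ℕ → (ℕ → ℕ) → (ℕ → K) → K
  | 0, _, φ => φ 0
  | k+1, L, φ => VV b k (fun t => L (t+1))
      (fun s => φ (L 0) + b * ∑ m ∈ range (L 0 - s), φ (s + m))

theorem VV_congr (b : K) (k : ℕ) : ∀ (L : ℕ → ℕ) (hL : Antitone L) (φ ψ : ℕ → K),
    (∀ s ≤ L 0, φ s = ψ s) → VV b k L φ = VV b k L ψ := by
  induction k with
  | zero => intro L _ φ ψ h; exact h 0 (Nat.zero_le _)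
  | succ k ih =>
    intro L hL φ ψ h
    refine ih _ (fun i j hij => hL (by omega)) _ _ fun s hs => ?_
    rw [h _ le_rfl]
    congr 2
    refine Finset.sum_congr rfl fun m hm => h _ ?_
    simp at hm; omega

theorem VV_lin (b : K) (k : ℕ) : ∀ (L : ℕ → ℕ) (φ ψ : ℕ → K) (c e : K),
    VV b k L (fun s => c * φ s + e * ψ s) = c * VV b k L φ + e * VV b k L ψ := by
  induction k with
  | zero => intro L φ ψ c e; rfl
  | succ k ih =>
    intro L φ ψ c e
    simp only [VV]
    rw [← ih]
    congr 1; funext s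
    rw [Finset.sum_add_distrib, ← Finset.mul_sum, ← Finset.mul_sum]; ring

def EE (b x : K) (k : ℕ) (L : ℕ → ℕ) : K := VV b k L (fun s => x^(L 0 - s))
def RR (b x : K) (d k : ℕ) (L : ℕ → ℕ) : K := VV b k L (fun s => gg b x (L 0) d (L 0 - s))

theorem RR_succ (b x : K) (d k : ℕ) (L : ℕ → ℕ) (hL : Antitone L) :
    RR b x d (k+1) L = b * (CC b x (L 1) (L 0 - L 1) d * EE b x k (fun t => L (t+1))
      - RR b x (d+1) k (fun t => L (t+1))) := by
  unfold RR EE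
  have : b * (CC b x (L 1) (L 0 - L 1) d * VV b k (fun t => L (t+1)) (fun s => x^(L (0+1) - s))
      - VV b k (fun t => L (t+1)) (fun s => gg b x (L (0+1)) (d+1) (L (0+1) - s)))
      = VV b k (fun t => L (t+1)) (fun s => (b * CC b x (L 1) (L 0 - L 1) d) * x^(L (0+1) - s)
        + (-b) * gg b x (L (0+1)) (d+1) (L (0+1) - s)) := by
    rw [VV_lin]; ring
  rw [this]
  simp only [VV]
  refine VV_congr b k _ (fun i j hij => hL (by omega)) _ _ fun s hs => ?_
  simp only [zero_add] at hs ⊢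
  have h10 : L 1 ≤ L 0 := hL (by omega)
  have h := gg_main b x (L 1) d (L 1 - s) (L 0 - L 1)
  rw [show L 1 + (L 0 - L 1) = L 0 by omega, show L 1 - s + (L 0 - L 1) = L 0 - s by omega] at h
  have hs : ∑ m ∈ range (L 0 - s), gg b x (L 0) d (L 0 - (s + m))
      = ∑ m ∈ range (L 0 - s), gg b x (L 0) d (m + 1) := by
    rw [← Finset.sum_range_reflect]
    refine Finset.sum_congr rfl fun m hm => ?_
    simp at hm
    congr 1; omega
  rw [hs, Nat.sub_self, gg_zero]
  linear_combination b * h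

theorem RR_eq (b x : K) (k : ℕ) : ∀ (d : ℕ) (L : ℕ → ℕ) (hL : Antitone L) (hk : L k = 0)
    (hdk : 1 ≤ d + k),
    RR b x d k L = b * ∑ j ∈ range k, (-b)^j * CC b x (L (j+1)) (L j - L (j+1)) (d+j)
      * EE b x (k-1-j) (fun t => L (t+j+1)) := by
  induction k with
  | zero =>
    intro d L hL hk hd
    obtain ⟨d, rfl⟩ : ∃ e, d = e+1 := ⟨d-1, by omega⟩
    simp [RR, VV, hk, gg_zero]
  | succ k ih =>
    intro d L hL hk hd
    rw [RR_succ _ _ _ _ _ hL, ih (d+1) (fun t => L (t+1)) (fun i j hij => hL (by omega)) hk (by omega),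
      Finset.sum_range_succ']
    simp only [Finset.mul_sum, mul_add, mul_sub]
    rw [sub_eq_neg_add, ← Finset.sum_neg_distrib]
    congr 1
    · refine Finset.sum_congr rfl fun j hj => ?_
      rw [show d + 1 + j = d + (j+1) by ring, show k + 1 - 1 - (j+1) = k - 1 - j by omega]
      simp only [show ∀ t, t + (j+1) + 1 = t + j + 1 + 1 by intro t; ring]
      ring
    · simp

theorem EE_rec (b x : K) (hb : b ≠ 0) (k : ℕ) (L : ℕ → ℕ) (hL : Antitone L) (hk : L k = 0)
    (h1 : 1 ≤ k) :
    EE b x k L = ∑ j ∈ range k, (-b)^j * CC b x (L (j+1)) (L j - L (j+1)) j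
      * EE b x (k-1-j) (fun t => L (t+j+1)) := by
  have h := RR_eq b x k 0 L hL hk (by omega)
  have h2 : RR b x 0 k L = b * EE b x k L := by
    have := VV_lin b k L (fun s => x^(L 0 - s)) (fun _ => 0) b 0
    simp only [mul_zero, add_zero, zero_mul] at this
    exact this
  rw [h2] at h
  simpa using mul_left_cancel₀ hb h


def RowOK (w q : ℕ) (U : Finset (Fin w)) (row : Fin w → Option Bool) : Prop :=
  (∀ c : Fin w, q ≤ (c:ℕ) → row c = none) ∧
  (∀ c c' : Fin w, row c = some false → c' < c → row c' = none) ∧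
  (∀ c ∈ U, row c = none) ∧
  (∀ c : Fin w, (c:ℕ) < q → c ∉ U →
    (∀ c' : Fin w, c < c' → (c':ℕ) < q → row c' ≠ some false) → row c ≠ none)

def rA {w : ℕ} (P : Finset (Fin w)) : Fin w → Option Bool := fun c => if c ∈ P then some true else none
def rB {w : ℕ} (P : Finset (Fin w)) (c0 : Fin w) : Fin w → Option Bool :=
  fun c => if c ∈ P ∧ c0 < c then some true else if c = c0 then some false else none

theorem sum_rank {w : ℕ} (ψ : ℕ → K) (P : Finset (Fin w)) :
    ∑ c ∈ P, ψ (P.filter (fun c' => c < c')).card = ∑ m ∈ range P.card, ψ m := by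
  induction P using Finset.induction_on_min with
  | empty => simp
  | insert a s ha ih =>
    have hns : a ∉ s := fun h => lt_irrefl _ (ha a h)
    rw [Finset.sum_insert hns, Finset.card_insert_of_notMem hns, Finset.sum_range_succ, ← ih, add_comm]
    congr 1
    · refine Finset.sum_congr rfl fun c hc => ?_
      rw [Finset.filter_insert, if_neg (not_lt.2 (ha c hc).le)]
    · rw [Finset.filter_insert, if_neg (lt_irrefl _), Finset.filter_true_of_mem ha]

theorem rowOK_iff (w q : ℕ) (U : Finset (Fin w)) (row : Fin w → Option Bool) :
    RowOK w q U row ↔ row = rA (univ.filter fun c : Fin w => (c:ℕ) < q ∧ c ∉ U) ∨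
      ∃ c0 ∈ (univ.filter fun c : Fin w => (c:ℕ) < q ∧ c ∉ U),
        row = rB (univ.filter fun c : Fin w => (c:ℕ) < q ∧ c ∉ U) c0 := by
  constructor
  · rintro ⟨h1, h2, h3, h4⟩
    by_cases h : ∃ c0, row c0 = some false
    · right
      obtain ⟨c0, hc0⟩ := h
      have hq : (c0:ℕ) < q := by
        by_contra hh; rw [h1 c0 (by omega)] at hc0; simp at hc0
      have hU : c0 ∉ U := by
        intro hh; rw [h3 c0 hh] at hc0; simp at hc0
      refine ⟨c0, by simp [hq, hU], ?_⟩
      have hgt : ∀ c, c0 < c → row c ≠ some false := by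
        intro c hc hf
        rw [h2 c c0 hf hc] at hc0; simp at hc0
      funext c
      simp only [rB, mem_filter, mem_univ, true_and]
      rcases lt_trichotomy c c0 with hlt | rfl | hlt
      · rw [if_neg (fun hh => absurd hh.2 (not_lt.2 hlt.le)), if_neg hlt.ne, h2 c0 c hc0 hlt]
      · rw [if_neg (fun hh => lt_irrefl _ hh.2), if_pos rfl, hc0]
      · by_cases hc : (c:ℕ) < q ∧ c ∉ U
        · rw [if_pos ⟨hc, hlt⟩]
          have hn := h4 c hc.1 hc.2 (fun c' hc' _ => hgt c' (hlt.trans hc'))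
          have hf := hgt c hlt
          rcases hr : row c with _ | (_ | _) <;> simp_all
        · rw [if_neg (fun hh => hc hh.1), if_neg hlt.ne']
          by_cases hcU : c ∈ U
          · exact h3 c hcU
          · exact h1 c (by by_contra h; exact hc ⟨by omega, hcU⟩)
    · left
      push Not at h
      funext c
      simp only [rA, mem_filter, mem_univ, true_and]
      by_cases hc : (c:ℕ) < q ∧ c ∉ U
      · rw [if_pos hc]
        have hn := h4 c hc.1 hc.2 (fun c' _ _ => h c')
        have hf := h c
        rcases hr : row c with _ | (_ | _) <;> simp_all
      · rw [if_neg hc]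
        by_cases hcU : c ∈ U
        · exact h3 c hcU
        · exact h1 c (by by_contra h; exact hc ⟨by omega, hcU⟩)
  · rintro (rfl | ⟨c0, hc0, rfl⟩)
    · refine ⟨?_, ?_, ?_, ?_⟩
      · intro c hc; simp [rA]; omega
      · intro c c' h; simp [rA] at h
      · intro c hc; simp [rA, hc]
      · intro c hc hU _; simp [rA, hc, hU]
    · simp only [mem_filter, mem_univ, true_and] at hc0
      have hf : ∀ c, rB (univ.filter fun c : Fin w => (c:ℕ) < q ∧ c ∉ U) c0 c = some false ↔ c = c0 := by
        intro c; simp only [rB]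
        split_ifs with h1 h2
        · simp; rintro rfl; exact lt_irrefl _ h1.2
        · simp [h2]
        · simp [h2]
      refine ⟨?_, ?_, ?_, ?_⟩
      · intro c hc
        have : c ≠ c0 := by rintro rfl; omega
        simp [rB, this]; omega
      · intro c c' h hlt
        rw [hf] at h; subst h
        simp [rB, hlt.ne]; intro _ _; exact hlt.le
      · intro c hc
        have : c ≠ c0 := by rintro rfl; exact hc0.2 hc
        simp [rB, this, hc]
      · intro c hc hU h
        rcases lt_trichotomy c c0 with hlt | rfl | hlt
        · exact absurd ((hf c0).2 rfl) (h c0 hlt hc0.1)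
        · rw [(hf _).2 rfl]; simp
        · simp [rB, hc, hU, hlt]

theorem row_sum (b : K) (w q : ℕ) (hq : q ≤ w) (U : Finset (Fin w)) (hU : ∀ c ∈ U, (c:ℕ) < q)
    (φ : ℕ → K) :
    ∑ row ∈ univ.filter (RowOK w q U),
      b ^ (univ.filter fun c => row c = some false).card *
        φ ((univ.filter fun c => row c = some true).card + U.card)
      = φ q + b * ∑ m ∈ range (q - U.card), φ (U.card + m) := by
  set P : Finset (Fin w) := univ.filter fun c : Fin w => (c:ℕ) < q ∧ c ∉ U with hP
  have hPc : P.card + U.card = q := by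
    rw [← Finset.card_union_of_disjoint]
    · have : P ∪ U = univ.filter fun c : Fin w => (c:ℕ) < q := by
        ext c; simp only [hP, mem_union, mem_filter, mem_univ, true_and]
        by_cases h : c ∈ U
        · simp [h, hU c h]
        · simp [h]
      rw [this, Fin.card_filter_val_lt]; omega
    · rw [Finset.disjoint_left]; intro c hc hc'
      simp [hP] at hc; exact hc.2 hc'
  have hfB : ∀ c0 c, rB P c0 c = some false ↔ c = c0 := by
    intro c0 c; simp only [rB]
    split_ifs with h1 h2
    · simp; rintro rfl; exact lt_irrefl _ h1.2
    · simp [h2]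
    · simp [h2]
  have hset : univ.filter (RowOK w q U) = insert (rA P) (P.image (rB P)) := by
    ext row
    simp only [mem_filter, mem_univ, true_and, rowOK_iff, mem_insert, mem_image, ← hP]
    constructor
    · rintro (h | ⟨c, hc, h⟩)
      · exact Or.inl h
      · exact Or.inr ⟨c, hc, h.symm⟩
    · rintro (h | ⟨c, hc, h⟩)
      · exact Or.inl h
      · exact Or.inr ⟨c, hc, h.symm⟩
  have hni : rA P ∉ P.image (rB P) := by
    simp only [mem_image, not_exists, not_and]
    intro c _ h
    have := congrFun h c
    rw [(hfB c c).2 rfl] at this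
    simp only [rA] at this
    split_ifs at this <;> simp at this
  rw [hset, Finset.sum_insert hni, Finset.sum_image]
  · congr 1
    · have e1 : (univ.filter fun c => rA P c = some false) = ∅ := by
        ext c; simp [rA]
      have e2 : (univ.filter fun c => rA P c = some true) = P := by
        ext c; simp [rA]
      rw [e1, e2, hPc]; simp
    · rw [show q - U.card = P.card by omega, ← sum_rank (fun m => φ (U.card + m)) P, Finset.mul_sum]
      refine Finset.sum_congr rfl fun c hc => ?_
      have e1 : (univ.filter fun c' => rB P c c' = some false) = {c} := by
        ext c'; simp [hfB]
      have e2 : (univ.filter fun c' => rB P c c' = some true) = P.filter (fun c' => c < c') := by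
        ext c'; rw [mem_filter, mem_filter]; simp only [mem_univ, true_and, rB]
        by_cases h1 : c' ∈ P ∧ c < c'
        · simp [h1]
        · rw [if_neg h1]
          refine iff_of_false ?_ h1
          split_ifs <;> simp
      rw [e1, e2]; simp [add_comm]
  · intro c _ c' _ h
    have := congrFun h c
    rw [(hfB c c).2 rfl] at this
    exact (hfB c' c).1 this.symm

def UU {k w : ℕ} (F : Fin k → Fin w → Option Bool) : Finset (Fin w) :=
  univ.filter fun c => ∃ i, F i c = some true

theorem aCount_eq_s2 {k w : ℕ} {lam : Fin k → ℕ} {F : Fin k → Fin w → Option Bool}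
    (h : IsCCT k w lam F) : aCount k w F = (UU F).card := by
  unfold aCount
  refine Finset.card_bij (fun p _ => p.2) ?_ ?_ ?_
  · intro p hp; simp at hp; simp [UU]; exact ⟨_, hp⟩
  · rintro ⟨i, c⟩ hp ⟨i', c'⟩ hp' (rfl : c = c')
    simp at hp hp'
    rcases lt_trichotomy i i' with hl | rfl | hl
    · rw [h.2.2.1 i' i c hp' hl] at hp; simp at hp
    · rfl
    · rw [h.2.2.1 i i' c hp hl] at hp'; simp at hp'
  · intro c hc; simp [UU] at hc
    obtain ⟨i, hi⟩ := hc
    exact ⟨(i, c), by simp [hi], rfl⟩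

theorem isCCT_cons {k w : ℕ} (L : ℕ → ℕ) (row : Fin w → Option Bool)
    (F : Fin k → Fin w → Option Bool) :
    IsCCT (k+1) w (fun i => L i) (Fin.cons row F : Fin (k+1) → Fin w → Option Bool) ↔
      IsCCT k w (fun i => L (i+1)) F ∧ RowOK w (L 0) (UU F) row := by
  unfold IsCCT RowOK
  simp only [Fin.forall_fin_succ, Fin.cons_zero, Fin.cons_succ, Fin.val_zero, Fin.val_succ,
    Fin.succ_lt_succ_iff, Fin.succ_pos, not_lt_zero, Fin.not_lt_zero, UU, mem_filter, mem_univ, true_and,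
    lt_irrefl, IsEmpty.forall_iff, implies_true, forall_const, and_true, not_exists, forall_exists_index]
  constructor
  · rintro ⟨⟨a1, a2⟩, ⟨b1, b2⟩, c1, d1, d2⟩
    exact ⟨⟨a2, b2, fun i i' c h => (c1 i).2 i' c h, d2⟩, a1, b1, fun c i h => (c1 i).1 c h, d1⟩
  · rintro ⟨⟨a2, b2, c1, d2⟩, a1, b1, c2, d1⟩
    exact ⟨⟨a1, a2⟩, ⟨b1, b2⟩, fun i => ⟨fun c h => c2 c i h, fun i' c h => c1 i i' c h⟩, d1, d2⟩

theorem counts_cons {k w : ℕ} (row : Fin w → Option Bool)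
    (F : Fin k → Fin w → Option Bool) (v : Bool) :
    (univ.filter fun p : Fin (k+1) × Fin w => (Fin.cons row F : Fin (k+1) → Fin w → Option Bool) p.1 p.2 = some v).card
      = (univ.filter fun c => row c = some v).card +
       (univ.filter fun p : Fin k × Fin w => F p.1 p.2 = some v).card := by
  simp only [Finset.card_filter, Fintype.sum_prod_type, Fin.sum_univ_succ, Fin.cons_zero, Fin.cons_succ]

theorem cct_sum (b : K) (w k : ℕ) : ∀ (L : ℕ → ℕ) (_ : Antitone L) (_ : L 0 ≤ w) (φ : ℕ → K),
    ∑ F ∈ univ.filter (IsCCT k w (fun i => L i)), b ^ (bCount k w F) * φ (aCount k w F)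
      = VV b k L φ := by
  induction k with
  | zero =>
    intro L _ _ φ
    have : univ.filter (IsCCT 0 w (fun i => L i)) = univ := by
      ext F; simp [IsCCT]
    rw [this, Fintype.sum_unique]
    simp [VV, aCount, bCount]
  | succ k ih =>
    intro L hL hw φ
    simp only [VV]
    have h10 : L 1 ≤ L 0 := hL (by omega)
    rw [← ih (fun t => L (t+1)) (fun i j hij => hL (by omega)) (by simpa using h10.trans hw)]
    rw [Finset.sum_filter, ← (Fin.consEquiv (fun _ : Fin (k+1) => Fin w → Option Bool)).sum_comp,
      Fintype.sum_prod_type, Finset.sum_comm, Finset.sum_filter]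
    refine Finset.sum_congr rfl fun F _ => ?_
    simp only [Fin.consEquiv, Equiv.coe_fn_mk, isCCT_cons]
    split_ifs with hF
    · have hU : ∀ c ∈ UU F, (c:ℕ) < L 0 := by
        intro c hc
        simp only [UU, mem_filter, mem_univ, true_and] at hc
        obtain ⟨i, hi⟩ := hc
        by_contra hh
        have := hF.1 i c (le_trans (hL (Nat.zero_le _)) (not_lt.1 hh))
        rw [this] at hi; simp at hi
      rw [aCount_eq_s2 hF, ← row_sum b w (L 0) hw (UU F) hU φ, Finset.mul_sum, Finset.sum_filter]
      refine Finset.sum_congr rfl fun row _ => ?_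
      simp only [hF, true_and]
      split_ifs with hr
      · unfold bCount
        have := aCount_eq_s2 hF
        unfold aCount at this ⊢
        rw [counts_cons, counts_cons, this, pow_add]; ring
      · rfl
    · simp [hF]

theorem icho_nat (a d : ℕ) : icho a d = (a.choose d : ℤ) := by
  unfold icho
  split_ifs with h
  · simp
  · rw [Nat.choose_eq_zero_of_lt (by omega)]; rfl

theorem icho_neg (a d : ℤ) (h : d < 0) : icho a d = 0 := by
  unfold icho; rw [if_neg (by omega)]

theorem icho_cp (a d : ℕ) : ((icho a ((d:ℤ) - 1) : ℤ) : K) = cp K a d := by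
  cases d with
  | zero => rw [icho_neg _ _ (by simp)]; simp [cp]
  | succ d =>
    rw [show ((d+1:ℕ):ℤ) - 1 = (d:ℤ) by push_cast; ring, icho_nat]; simp [cp]

def ent (a b : K) (L : ℕ → ℕ) (i j : ℕ) : K :=
  b ^ ((j : ℤ) - (i : ℤ)) * a ^ ((L i : ℤ) - (L (j + 1) : ℤ)) *
              (((icho (L (j + 1)) ((j : ℤ) - (i : ℤ)) : ℤ) : K)
                + b * ((icho (L (j + 1)) ((j : ℤ) - (i : ℤ) + 1) : ℤ) : K))
            + b ^ ((j : ℤ) - (i : ℤ)) * a ^ ((L i : ℤ) - (L j : ℤ)) *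
              ∑ l ∈ Finset.range (L j - L (j + 1)),
                a ^ (l : ℕ) *
                  (((icho ((L j : ℤ) - (l : ℤ) - 1) ((j : ℤ) - (i : ℤ) - 1) : ℤ) : K)
                    + b * ((icho ((L j : ℤ) - (l : ℤ) - 1) ((j : ℤ) - (i : ℤ)) : ℤ) : K))

theorem ent_zero (a b : K) (L : ℕ → ℕ) (i j : ℕ) (h : j + 1 < i) : ent a b L i j = 0 := by
  unfold ent
  simp [icho_neg _ ((j:ℤ) - i) (by omega), icho_neg _ ((j:ℤ) - i + 1) (by omega),
    icho_neg _ ((j:ℤ) - i - 1) (by omega)]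

theorem ent_one (a b : K) (hb : b ≠ 0) (L : ℕ → ℕ) (j : ℕ) : ent a b L (j+1) j = 1 := by
  unfold ent
  have e : (j:ℤ) - ((j+1:ℕ):ℤ) = -1 := by push_cast; ring
  have e0 : icho (L (j+1)) 0 = 1 := by
    have := icho_nat (L (j+1)) 0
    simpa using this
  simp [e, icho_neg _ (-1) (by omega), icho_neg _ (-2) (by omega), e0, hb]

theorem ent_pos (a b : K) (ha : a ≠ 0) (L : ℕ → ℕ) (hL : Antitone L) (i d : ℕ) :
    ent a b L i (i+d) = b^d * a ^ ((L i : ℤ) - (L (i+d+1) : ℤ)) *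
      CC b a⁻¹ (L (i+d+1)) (L (i+d) - L (i+d+1)) d := by
  unfold ent CC
  have e : ((i+d:ℕ):ℤ) - (i:ℤ) = (d:ℤ) := by push_cast; ring
  have hle : L (i+d+1) ≤ L (i+d) := hL (by omega)
  rw [e, mul_add _ (cbx b (L (i+d+1)) d)]
  congr 1
  · rw [icho_nat, show (d:ℤ) + 1 = ((d+1:ℕ):ℤ) by push_cast; ring, icho_nat]
    simp [cbx]
  · rw [← Finset.sum_range_reflect, Finset.mul_sum, Finset.mul_sum]
    refine Finset.sum_congr rfl fun l hl => ?_
    rw [Finset.mem_range] at hl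
    have e1 : (L (i+d) : ℤ) - ((L (i+d) - L (i+d+1) - 1 - l : ℕ) : ℤ) - 1
        = ((L (i+d+1) + l : ℕ) : ℤ) := by omega
    rw [e1, icho_cp, icho_nat]
    have e2 : a ^ ((L i : ℤ) - (L (i+d) : ℤ)) * a ^ (L (i+d) - L (i+d+1) - 1 - l)
        = a ^ ((L i : ℤ) - (L (i+d+1) : ℤ)) * a⁻¹ ^ (l+1) := by
      rw [← zpow_natCast, ← zpow_add₀ ha, inv_pow, ← zpow_natCast, ← zpow_neg, ← zpow_add₀ ha]
      congr 1; omega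
    simp only [cbm, Int.cast_natCast, zpow_natCast]
    linear_combination (b^d * (cp K (L (i+d+1) + l) d + b * ((L (i+d+1) + l).choose d : K))) * e2

theorem final_det (a b : K) (ha : a ≠ 0) (hb : b ≠ 0) (L : ℕ → ℕ) (hL : Antitone L) (n : ℕ)
    (hn : L (n+1) = 0) :
    (Matrix.of fun i j : Fin (n+1) => ent a b L i j).det = VV b (n+1) L (fun s => a^s) := by
  rw [hess_det n _ (fun i => a ^ (L i) * EE b a⁻¹ (n+1-i) (fun t => L (t+i)))]
  · have := VV_lin b (n+1) L (fun s => a⁻¹^(L 0 - s)) (fun _ => 0) (a^(L 0)) 0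
    simp only [mul_zero, add_zero, zero_mul] at this
    simp only [EE, Nat.sub_zero, add_zero]
    rw [← this]
    refine VV_congr b _ L hL _ _ fun s hs => ?_
    rw [inv_pow, mul_inv_eq_iff_eq_mul₀ (pow_ne_zero _ ha), ← pow_add]
    congr 1; omega
  · simp [hn, EE, VV]
  · intro i j h; exact ent_zero _ _ _ _ _ h
  · intro i j h; rw [Matrix.of_apply, ← h]; exact ent_one _ _ hb _ _
  · intro i
    simp only [Matrix.of_apply]
    rw [Fin.sum_univ_eq_sum_range (fun j => if (i:ℕ) ≤ j then (-1)^(j - (i:ℕ)) * ent a b L i j *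
      (a ^ (L (j+1)) * EE b a⁻¹ (n+1-(j+1)) (fun t => L (t+(j+1)))) else 0) (n+1)]
    obtain ⟨m, hm⟩ : ∃ m, n + 1 = (i:ℕ) + m := ⟨n+1-i, by omega⟩
    have hm0 : 1 ≤ m := by omega
    rw [EE_rec b a⁻¹ hb (n+1-i) (fun t => L (t+i)) (fun x y h => hL (by omega))
      (by rw [show n + 1 - i + (i:ℕ) = n+1 by omega]; exact hn) (by omega)]
    rw [show n + 1 - (i:ℕ) = m by omega, show range (n+1) = range ((i:ℕ) + m) from congrArg _ hm, Finset.sum_range_add, Finset.mul_sum]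
    rw [Finset.sum_eq_zero (s := range (i:ℕ)), zero_add]
    · refine Finset.sum_congr rfl fun d hd => ?_
      rw [if_pos (by omega), ent_pos a b ha L hL, Nat.add_sub_cancel_left,
        show n + 1 - ((i:ℕ) + d + 1) = m - 1 - d by omega]
      have hz : a ^ ((L i : ℤ) - (L (i+d+1) : ℤ)) * a ^ (L (i+d+1)) = a ^ (L i) := by
        rw [← zpow_natCast, ← zpow_natCast, ← zpow_add₀ ha]; congr 1; ring
      simp only [show d + (i:ℕ) = i + d by ring, show d + 1 + (i:ℕ) = i + d + 1 by ring,
        show ∀ t, t + d + 1 + (i:ℕ) = t + (i + d + 1) by intro t; ring]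
      rw [neg_pow b, ← hz]
      ring
    · intro j hj
      rw [Finset.mem_range] at hj
      rw [if_neg (by omega)]

end alg

theorem aK_ne : aK ≠ 0 := by
  unfold aK
  rw [Ne, IsFractionRing.to_map_eq_zero_iff]
  exact MvPolynomial.X_ne_zero _

theorem bK_ne : bK ≠ 0 := by
  unfold bK
  rw [Ne, IsFractionRing.to_map_eq_zero_iff]
  exact MvPolynomial.X_ne_zero _

/-- The weight generating function `P_lam(α,β) = Σ_T wt T` over Condensed Catalan
tableaux of shape `lam` and size `(k,n)` equals `α^k β^(n-k) det A_lam^{α,β}`. -/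
theorem stmt2 (n k : ℕ) (hk : 1 ≤ k) (hkn : k ≤ n) (lam : Fin k → ℕ)
    (hmono : ∀ i j : Fin k, i ≤ j → lam j ≤ lam i) (hbd : ∀ i, lam i ≤ n - k) :
    ∑ F ∈ Finset.univ.filter (IsCCT k (n - k) lam),
        aK ^ (k + aCount k (n - k) F) * bK ^ ((n - k) + bCount k (n - k) F)
      = aK ^ k * bK ^ (n - k) *
        Matrix.det (Matrix.of fun i j : Fin k =>
          (let lamE : ℕ → ℕ := fun t => if h : t < k then lam ⟨t, h⟩ else 0
           bK ^ ((j : ℤ) - (i : ℤ)) * aK ^ ((lamE i : ℤ) - (lamE (j + 1) : ℤ)) *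
              (((icho (lamE (j + 1)) ((j : ℤ) - (i : ℤ)) : ℤ) : KF)
                + bK * ((icho (lamE (j + 1)) ((j : ℤ) - (i : ℤ) + 1) : ℤ) : KF))
            + bK ^ ((j : ℤ) - (i : ℤ)) * aK ^ ((lamE i : ℤ) - (lamE j : ℤ)) *
              ∑ l ∈ Finset.range (lamE j - lamE (j + 1)),
                aK ^ (l : ℕ) *
                  (((icho ((lamE j : ℤ) - (l : ℤ) - 1) ((j : ℤ) - (i : ℤ) - 1) : ℤ) : KF)
                    + bK * ((icho ((lamE j : ℤ) - (l : ℤ) - 1) ((j : ℤ) - (i : ℤ)) : ℤ) : KF)))) := by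
  
  obtain ⟨m, rfl⟩ : ∃ m, k = m + 1 := ⟨k-1, by omega⟩
  set L : ℕ → ℕ := fun t => if h : t < m + 1 then lam ⟨t, h⟩ else 0 with hLdef
  have hL : Antitone L := by
    intro i j hij
    simp only [hLdef]
    split_ifs with h1 h2
    · exact hmono _ _ hij
    · omega
    · exact Nat.zero_le _
    · exact le_rfl
  have hlam : lam = fun i : Fin (m+1) => L i := by
    funext i; simp only [hLdef]; rw [dif_pos i.2]
  have hk0 : L (m+1) = 0 := by simp [hLdef]
  have h0 : L 0 ≤ n - (m+1) := by
    simp only [hLdef]; rw [dif_pos (by omega)]; exact hbd _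
  have hs := cct_sum bK (n - (m+1)) (m+1) L hL h0 (fun s => aK ^ s)
  rw [← final_det aK bK aK_ne bK_ne L hL m hk0, ← hlam] at hs
  have e : ∀ F : Fin (m+1) → Fin (n-(m+1)) → Option Bool,
      aK ^ (m + 1 + aCount (m+1) (n - (m+1)) F) * bK ^ ((n - (m+1)) + bCount (m+1) (n - (m+1)) F)
      = aK ^ (m+1) * bK ^ (n - (m+1)) *
        (bK ^ bCount (m+1) (n - (m+1)) F * aK ^ aCount (m+1) (n - (m+1)) F) := by
    intro F; rw [pow_add, pow_add]; ring
  simp only [e]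
  rw [← Finset.mul_sum, hs]
  rfl
end

section
/- (Derrida's partition function formula) Fix an integer n ≥ 1 and let Z_n(α,β) = Σ_{k=0}^{n} N_{n−k,k}(α,β) be the sum of wt(T) over all Condensed Catalan tableaux of size (k,n) for all 0 ≤ k ≤ n. Then Z_n(α,β) = Σ_{p=1}^{n} b(n,p) · Σ_{i=0}^{p} α^{n−i} β^{n−p+i}, where b(n,p) = (p/(2n−p))·binom(2n−p, n) (a ballot number, which is a positive integer); equivalently, (2n−p)·b(n,p) = p·binom(2n−p, n) for each p. The identity holds in ℤ[α,β]. -/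
open scoped Classical
open Finset

namespace CCTProof
open Polynomial

def gb : ℕ → ℕ → ℕ
  | 0, _ => 1
  | _ + 1, 0 => 0
  | m + 1, p + 1 => gb (m + 1) p + gb m (p + 2)

lemma gb_closed : ∀ m p : ℕ, 1 ≤ m + p → (2 * m + p) * gb m p = p * Nat.choose (2 * m + p) m
  | 0, p, _ => by simp [gb]
  | m + 1, 0, _ => by simp [gb]
  | m + 1, p + 1, _ => by
    have h1 := gb_closed (m + 1) p (by omega)
    have h2 := gb_closed m (p + 2) (by omega)
    have e1 : 2 * (m + 1) + p = 2 * m + p + 2 := by ring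
    have e2 : 2 * m + (p + 2) = 2 * m + p + 2 := by ring
    have e3 : 2 * (m + 1) + (p + 1) = (2 * m + p + 2) + 1 := by ring
    rw [e1] at h1
    rw [e2] at h2
    rw [e3, Nat.choose_succ_succ, gb]
    have h3 := Nat.choose_succ_right_eq (2 * m + p + 2) m
    have e4 : 2 * m + p + 2 - m = m + p + 2 := by omega
    rw [e4] at h3
    simp only [Nat.succ_eq_add_one] at *
    generalize (2 * m + p + 2).choose (m + 1) = B at *
    generalize (2 * m + p + 2).choose m = A at *
    generalize gb (m + 1) p = x at *
    generalize gb m (p + 2) = y at *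
    have hpos : 0 < (2 * m + p + 2) * (m + 1) := by positivity
    apply Nat.eq_of_mul_eq_mul_left hpos
    zify at *
    linear_combination (2 * m + p + 3 : ℤ) * (m + 1) * (h1 + h2) + (p * (2 * m + p + 3) - (2 * m + p + 2) * (p + 1) : ℤ) * h3

lemma gb_pos : ∀ m p : ℕ, 0 < gb m (p + 1)
  | 0, p => by simp [gb]
  | m + 1, p => by
    have := gb_pos m (p + 1)
    rw [gb]; exact Nat.add_pos_right _ this

variable {R : Type*} [CommRing R] (a b : R)

noncomputable def dd : ℕ → R[X]
  | 0 => C a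
  | i + 1 => C (a * b) * (dd i + X ^ (i + 1))

noncomputable def DD : R[X] →ₗ[R] R[X] := (Polynomial.basisMonomials R).constr R (dd a b)

lemma DD_X (i : ℕ) : DD a b (X ^ i) = dd a b i := by
  have := (Polynomial.basisMonomials R).constr_basis R (dd a b) i
  rw [DD]
  simpa [Polynomial.coe_basisMonomials, ← Polynomial.X_pow_eq_monomial] using this

lemma DD_C (r : R) : DD a b (C r) = C r * C a := by
  have : (C r : R[X]) = r • (X ^ 0) := by simp [Polynomial.smul_eq_C_mul]
  rw [this, map_smul, DD_X, dd, Polynomial.smul_eq_C_mul, pow_zero, smul_eq_C_mul, mul_one]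

lemma DD_Cmul (r : R) (f : R[X]) : DD a b (C r * f) = C r * DD a b f := by
  rw [← smul_eq_C_mul, map_smul, smul_eq_C_mul]

lemma DD_mulX (f : R[X]) : DD a b (X * f) = C (a * b) * (DD a b f + X * f) := by
  induction f using Polynomial.induction_on' with
  | add p q hp hq => rw [mul_add, map_add, hp, hq, map_add]; ring
  | monomial n r =>
    rw [← C_mul_X_pow_eq_monomial, mul_left_comm, DD_Cmul, DD_Cmul, ← pow_succ', DD_X, DD_X, dd]
    ring

noncomputable def ss (p : ℕ) : R[X] := ∑ i ∈ range (p + 1), C (a ^ (p - i)) * X ^ i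

lemma ss_succ (p : ℕ) : ss a (p + 1) = C (a ^ (p + 1)) + X * ss a p := by
  rw [ss, sum_range_succ', ss, mul_sum, add_comm]
  congr 1
  · simp
  · refine sum_congr rfl fun i _ => ?_
    rw [Nat.add_sub_add_right]; ring

noncomputable def VV (p : ℕ) : R[X] := DD a b (ss a p) + X * ss a p

lemma VV_zero : ss a 1 = VV a b 0 := by
  have : ss a 0 = C 1 := by simp [ss]
  rw [VV, ss_succ, this, DD_C]; simp

lemma VV_succ (p : ℕ) : ss a (p + 2) = VV a b (p + 1) - C (a * b) * VV a b p := by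
  rw [VV, VV, ss_succ a (p + 1), ss_succ a p, map_add, DD_mulX, DD_C]
  simp only [map_pow, map_mul]
  ring

noncomputable def UU (n : ℕ) : R[X] :=
  ∑ q ∈ antidiagonal n, C ((a * b) ^ q.1 * (gb q.1 q.2 : R)) * ss a q.2

lemma UU_succ (n : ℕ) : UU a b (n + 1) = DD a b (UU a b n) + X * UU a b n := by
  have hR : DD a b (UU a b n) + X * UU a b n
      = ∑ q ∈ antidiagonal n, C ((a * b) ^ q.1 * (gb q.1 q.2 : R)) * VV a b q.2 := by
    rw [UU, map_sum, mul_sum, ← sum_add_distrib]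
    refine sum_congr rfl fun q _ => ?_
    rw [DD_Cmul, VV]; ring
  have e1 := Finset.Nat.sum_antidiagonal_succ' (n := n)
    (f := fun q : ℕ × ℕ => C ((a * b) ^ q.1 * (gb q.1 q.2 : R)) * ss a q.2)
  rw [hR, UU, e1]
  cases n with
  | zero => simp [gb, VV_zero a b]
  | succ n =>
    have e2 := Finset.Nat.sum_antidiagonal_succ' (n := n)
      (f := fun q : ℕ × ℕ => C ((a * b) ^ q.1 * (gb q.1 (q.2 + 1) : R)) * ss a (q.2 + 1))
    have e3 := Finset.Nat.sum_antidiagonal_succ' (n := n)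
      (f := fun q : ℕ × ℕ => C ((a * b) ^ q.1 * (gb q.1 (q.2 + 1) : R)) * VV a b q.2)
    have e4 := Finset.Nat.sum_antidiagonal_succ (n := n)
      (f := fun q : ℕ × ℕ => C ((a * b) ^ q.1 * (gb q.1 (q.2 + 1) : R)) * VV a b q.2)
    have e5 := Finset.Nat.sum_antidiagonal_succ (n := n)
      (f := fun q : ℕ × ℕ => C ((a * b) ^ q.1 * (gb q.1 q.2 : R)) * VV a b q.2)
    have e6 : ∑ q ∈ antidiagonal n,
        C ((a * b) ^ q.1 * (gb q.1 (q.2 + 1 + 1) : R)) * ss a (q.2 + 1 + 1)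
        = ∑ q ∈ antidiagonal n, C ((a * b) ^ q.1 * (gb q.1 (q.2 + 1 + 1) : R)) * VV a b (q.2 + 1)
          - ∑ q ∈ antidiagonal n,
            C ((a * b) ^ (q.1 + 1) * (gb q.1 (q.2 + 1 + 1) : R)) * VV a b q.2 := by
      rw [← sum_sub_distrib]
      refine sum_congr rfl fun q _ => ?_
      rw [VV_succ a b]
      simp only [map_pow, map_mul]
      ring
    have e7 : ∑ q ∈ antidiagonal n,
        C ((a * b) ^ (q.1 + 1) * (gb (q.1 + 1) (q.2 + 1) : R)) * VV a b q.2
        = ∑ q ∈ antidiagonal n, C ((a * b) ^ (q.1 + 1) * (gb (q.1 + 1) q.2 : R)) * VV a b q.2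
          + ∑ q ∈ antidiagonal n,
            C ((a * b) ^ (q.1 + 1) * (gb q.1 (q.2 + 1 + 1) : R)) * VV a b q.2 := by
      rw [← sum_add_distrib]
      refine sum_congr rfl fun q _ => ?_
      rw [gb]
      push_cast
      simp only [mul_add, map_add, add_mul]
    simp only [zero_add] at e2 e3 e4 e5 ⊢
    rw [e2, e6, e5, VV_zero a b]
    have e8 : gb 0 (n + 1 + 1) = gb 0 (n + 1) := by simp [gb]
    have e9 : gb (n + 1 + 1) 0 = 0 := by simp [gb]
    rw [e8, e7] at e4
    rw [e9]
    simp only [Nat.cast_zero, mul_zero, map_zero, zero_mul, zero_add]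
    linear_combination e4 - e3

end CCTProof

namespace CCTProof
open Polynomial

noncomputable def TT (k w : ℕ) : Finset ((Fin k → Fin (w + 1)) × (Fin k → Fin w → Option Bool)) :=
  Finset.univ.filter
    (fun pr : (Fin k → Fin (w + 1)) × (Fin k → Fin w → Option Bool) =>
                (∀ i j : Fin k, i ≤ j → (pr.1 j : ℕ) ≤ (pr.1 i : ℕ)) ∧
                IsCCT k w (fun i => (pr.1 i : ℕ)) pr.2)

lemma mem_TT {k w : ℕ} (l : Fin k → Fin (w + 1)) (F : Fin k → Fin w → Option Bool) :
    (l, F) ∈ TT k w ↔ (∀ i j : Fin k, i ≤ j → (l j : ℕ) ≤ (l i : ℕ)) ∧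
                IsCCT k w (fun i => (l i : ℕ)) F := by
  rw [TT, mem_filter]
  simp only [mem_univ, true_and]

def SF {k w : ℕ} (F : Fin k → Fin w → Option Bool) : Finset (Fin w) :=
  univ.filter (fun c => ∀ i, F i c ≠ some true)

def rA {w : ℕ} (r : Fin w → Option Bool) : Finset (Fin w) := univ.filter (fun c => r c = some true)
def rB {w : ℕ} (r : Fin w → Option Bool) : Finset (Fin w) := univ.filter (fun c => r c = some false)

lemma aCount_eq {k w : ℕ} (F : Fin k → Fin w → Option Bool) :
    aCount k w F = ∑ i, (rA (F i)).card := by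
  simp only [aCount, rA, card_filter, Fintype.sum_prod_type]

lemma bCount_eq {k w : ℕ} (F : Fin k → Fin w → Option Bool) :
    bCount k w F = ∑ i, (rB (F i)).card := by
  simp only [bCount, rB, card_filter, Fintype.sum_prod_type]

variable {R : Type*} [CommRing R] (a b : R)

noncomputable def wt {k w : ℕ} (F : Fin k → Fin w → Option Bool) : R[X] :=
  C (a ^ (k + aCount k w F) * b ^ (bCount k w F + (SF F)ᶜ.card)) * X ^ (SF F).card

noncomputable def PP (k w : ℕ) : R[X] := ∑ pr ∈ TT k w, wt a b pr.2

def VR {w : ℕ} (S : Finset (Fin w)) (r : Fin w → Option Bool) : Prop :=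
  (∀ c, c ∉ S → r c = none) ∧ (∀ c c', r c = some false → c' < c → r c' = none) ∧
  (∀ c ∈ S, (∀ c', c < c' → r c' ≠ some false) → r c ≠ none)

lemma mem_TT_cons {k w : ℕ} (l : Fin k → Fin (w + 1)) (r : Fin w → Option Bool)
    (F : Fin k → Fin w → Option Bool) :
    ((Fin.cons (Fin.last w) l : Fin (k + 1) → Fin (w + 1)),
      (Fin.cons r F : Fin (k + 1) → Fin w → Option Bool)) ∈ TT (k + 1) w ↔
    (l, F) ∈ TT k w ∧ VR (SF F) r := by
  have h0 : ∀ c : Fin w, (c : ℕ) < w := fun c => c.2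
  have h1 : ∀ c : Fin w, ¬ w ≤ (c : ℕ) := fun c => by omega
  have h2 : ∀ i, (l i : ℕ) ≤ w := fun i => by omega
  simp only [mem_TT, mem_filter, mem_univ, true_and, IsCCT, VR, SF, Fin.forall_fin_succ, Fin.cons_zero,
    Fin.cons_succ, Fin.val_last, Fin.succ_le_succ_iff, Fin.succ_lt_succ_iff, h0, h1, h2]
  simp only [Fin.succ_pos, Fin.not_lt_zero, Fin.zero_le, forall_true_left, false_implies,
    le_refl, true_and, implies_true, lt_irrefl, not_forall, not_not, forall_exists_index]
  constructor
  · rintro ⟨h3, h4, ⟨h5a, h5b⟩, h6, h7, h8⟩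
    exact ⟨⟨fun i => (h3 i).2, h4, h5b, fun i => (h6 i).2, h8⟩, fun c i => (h6 i).1 c, h5a, h7⟩
  · rintro ⟨⟨h3, h4, h5, h6, h7⟩, h8, h9, h10⟩
    exact ⟨fun i => ⟨fun h => absurd h (not_le.2 (Fin.succ_pos i)), h3 i⟩, h4, ⟨h9, h5⟩,
      fun i => ⟨fun c => h8 c i, h6 i⟩, h10, h7⟩

lemma wt_cons {k w : ℕ} (r : Fin w → Option Bool)
    (F : Fin k → Fin w → Option Bool) :
    wt a b (Fin.cons r F : Fin (k + 1) → Fin w → Option Bool) =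
      C (a ^ (k + aCount k w F) * b ^ (bCount k w F)) * C (a * a ^ (rA r).card * b ^ ((rB r).card +
        (SF F \ rA r)ᶜ.card)) * X ^ (SF F \ rA r).card := by
  have hS : SF (Fin.cons r F : Fin (k + 1) → Fin w → Option Bool) = SF F \ rA r := by
    ext c
    simp [SF, rA, Fin.forall_fin_succ, and_comm]
  rw [wt, hS, aCount_eq, bCount_eq, aCount_eq, bCount_eq, Fin.sum_univ_succ, Fin.sum_univ_succ]
  simp only [Fin.cons_zero, Fin.cons_succ, ← map_mul]
  congr 2
  ring

lemma row_sum {w : ℕ} (S : Finset (Fin w)) :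
    ∑ r ∈ univ.filter (VR S), C (a * a ^ (rA r).card * b ^ ((rB r).card +
        (S ∩ rA r).card)) * X ^ (S \ rA r).card = dd a b S.card := by
  induction S using Finset.induction_on_max with
  | empty =>
    have : univ.filter (VR (∅ : Finset (Fin w))) = {fun _ => none} := by
      ext r
      simp only [mem_filter, mem_univ, true_and, mem_singleton, VR]
      constructor
      · intro h; funext c; exact h.1 c (by simp)
      · rintro rfl; simp
    rw [this]
    simp [rA, rB, dd]
  | insert m S hm ih =>
    have hmS : m ∉ S := fun h => lt_irrefl _ (hm m h)
    have hset : univ.filter (VR (insert m S)) =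
        insert (Function.update (fun _ => none) m (some false))
          ((univ.filter (VR S)).image (fun r => Function.update r m (some true))) := by
      ext r
      simp only [mem_filter, mem_univ, true_and, mem_insert, mem_image, VR]
      constructor
      · rintro ⟨h1, h2, h3⟩
        have h4 : r m ≠ none := h3 m (by simp) (fun c' hc => by
          rw [h1 c']; · simp
          rintro (rfl | h)
          · exact lt_irrefl _ hc
          · exact lt_asymm hc (hm _ h))
        rcases hr : r m with _ | _ | _
        · exact absurd hr h4
        · left
          funext c
          by_cases hc : c = m
          · subst hc; simp [hr]
          · rw [Function.update_of_ne hc]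
            by_cases hcS : c ∈ S
            · exact h2 m c hr (hm c hcS)
            · exact h1 c (by simp [hc, hcS])
        · right
          refine ⟨Function.update r m none, ⟨?_, ?_, ?_⟩, ?_⟩
          · intro c hc
            by_cases hcm : c = m
            · subst hcm; simp
            · rw [Function.update_of_ne hcm]; exact h1 c (by simp [hc, hcm])
          · intro c c' hc hlt
            by_cases hcm : c = m
            · subst hcm; simp at hc
            · rw [Function.update_of_ne hcm] at hc
              by_cases hcm' : c' = m
              · subst hcm'; simp
              · rw [Function.update_of_ne hcm']; exact h2 c c' hc hlt
          · intro c hc hh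
            have hcm : c ≠ m := fun h => hmS (h ▸ hc)
            rw [Function.update_of_ne hcm]
            refine h3 c (by simp [hc]) fun c' hc' => ?_
            by_cases hcm' : c' = m
            · subst hcm'; simp [hr]
            · have := hh c' hc'
              rwa [Function.update_of_ne hcm'] at this
          · simp [← hr]
      · rintro (rfl | ⟨r, ⟨h1, h2, h3⟩, rfl⟩)
        · refine ⟨?_, ?_, ?_⟩
          · intro c hc
            have hcm : c ≠ m := fun h => hc (Or.inl h)
            simp [hcm]
          · intro c c' hc hlt
            by_cases hcm : c = m
            · subst hcm; simp [hlt.ne]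
            · simp [hcm] at hc
          · intro c hc hh
            rcases hc with rfl | hc
            · simp
            · have := hh m (hm c hc)
              simp at this
        · have hrm := h1 m hmS
          refine ⟨?_, ?_, ?_⟩
          · intro c hc
            have hcm : c ≠ m := fun h => hc (Or.inl h)
            rw [Function.update_of_ne hcm]
            exact h1 c fun h => hc (Or.inr h)
          · intro c c' hc hlt
            by_cases hcm : c = m
            · subst hcm; simp at hc
            · rw [Function.update_of_ne hcm] at hc
              have hcS : c ∈ S := by
                by_contra h
                rw [h1 c h] at hc; simp at hc
              have hcm' : c' ≠ m := (hlt.trans (hm c hcS)).ne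
              rw [Function.update_of_ne hcm']; exact h2 c c' hc hlt
          · intro c hc hh
            by_cases hcm : c = m
            · subst hcm; simp
            · rw [Function.update_of_ne hcm]
              refine h3 c (hc.resolve_left hcm) fun c' hc' => ?_
              by_cases hcm' : c' = m
              · subst hcm'; simp [hrm]
              · have := hh c' hc'
                rwa [Function.update_of_ne hcm'] at this
    have hinj : Set.InjOn (fun r : Fin w → Option Bool => Function.update r m (some true))
        (univ.filter (VR S) : Finset (Fin w → Option Bool)) := by
      intro r hr r' hr' h
      simp only [coe_filter, mem_univ, true_and, Set.mem_ofPred_eq] at hr hr'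
      funext c
      by_cases hcm : c = m
      · subst hcm; rw [hr.1 c hmS, hr'.1 c hmS]
      · have := congrFun h c
        simpa [Function.update_of_ne hcm] using this
    rw [hset, sum_insert, sum_image hinj, card_insert_of_notMem hmS, dd, ← ih]
    · have hA0 : rA (Function.update (fun _ => none) m (some false) : Fin w → Option Bool) = ∅ := by
        ext c
        by_cases hcm : c = m
        · subst hcm; simp [rA]
        · simp [rA, hcm]
      have hB0 : rB (Function.update (fun _ => none) m (some false) : Fin w → Option Bool) = {m} := by
        ext c
        by_cases hcm : c = m
        · subst hcm; simp [rB]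
        · simp [rB, hcm]
      rw [hA0, hB0, mul_add, mul_sum, add_comm]
      congr 1
      · refine sum_congr rfl fun r hr => ?_
        simp only [mem_filter, mem_univ, true_and] at hr
        have hrm := hr.1 m hmS
        have hA : rA (Function.update r m (some true)) = insert m (rA r) := by
          ext c
          by_cases hcm : c = m
          · subst hcm; simp [rA]
          · simp [rA, hcm]
        have hB : rB (Function.update r m (some true)) = rB r := by
          ext c
          by_cases hcm : c = m
          · subst hcm; simp [rB, hrm]
          · simp [rB, hcm]
        have hmA : m ∉ rA r := by simp [rA, hrm]
        have hI : insert m S ∩ insert m (rA r) = insert m (S ∩ rA r) := by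
          rw [insert_inter_distrib]
        have hD : insert m S \ insert m (rA r) = S \ rA r := by
          ext c; simp only [mem_sdiff, mem_insert]
          by_cases hcm : c = m
          · subst hcm; simp [hmS]
          · simp [hcm]
        rw [hA, hB, hI, hD, card_insert_of_notMem hmA, card_insert_of_notMem (by simp [hmS]),
          ← mul_assoc, ← map_mul]
        congr 2
        ring
      · simp [hmS]
    · simp only [mem_image, not_exists, not_and]
      intro r _ h
      have := congrFun h m
      simp at this

lemma PP_top (k w : ℕ) :
    ∑ pr ∈ TT (k + 1) w with pr.1 0 = Fin.last w, wt a b pr.2 = DD a b (PP a b k w) := by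
  rw [PP, map_sum]
  have key : ∀ q ∈ TT k w, DD a b (wt a b q.2) = ∑ r ∈ univ.filter (VR (SF q.2)),
      wt a b (Fin.cons r q.2 : Fin (k + 1) → Fin w → Option Bool) := by
    intro q _
    rw [wt, DD_Cmul, DD_X, ← row_sum, mul_sum]
    refine sum_congr rfl fun r hr => ?_
    rw [wt_cons, ← mul_assoc]
    have h : (SF q.2 \ rA r)ᶜ.card = (SF q.2)ᶜ.card + (SF q.2 ∩ rA r).card := by
      rw [← card_union_of_disjoint]
      · congr 1
        ext c; simp only [mem_compl, mem_sdiff, mem_union, mem_inter]; tauto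
      · rw [disjoint_left]; simp; tauto
    rw [h, ← map_mul, ← map_mul]
    congr 2
    ring
  rw [sum_congr rfl key, sum_sigma']
  symm
  refine sum_bij' (fun (x : (_ : (Fin k → Fin (w + 1)) × (Fin k → Fin w → Option Bool)) ×
        (Fin w → Option Bool)) _ =>
      ((Fin.cons (Fin.last w) x.1.1 : Fin (k + 1) → Fin (w + 1)),
        (Fin.cons x.2 x.1.2 : Fin (k + 1) → Fin w → Option Bool)))
    (fun pr _ => ⟨(Fin.tail pr.1, Fin.tail pr.2), pr.2 0⟩) ?_ ?_ ?_ ?_ ?_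
  · rintro ⟨⟨l, F⟩, r⟩ h
    simp only [mem_sigma, mem_filter, mem_univ, true_and] at h
    rw [mem_filter, mem_TT_cons]
    exact ⟨h, by simp⟩
  · rintro ⟨l, F⟩ h
    rw [mem_filter] at h
    obtain ⟨h, h'⟩ := h
    simp only at h'
    rw [← Fin.cons_self_tail l, ← Fin.cons_self_tail F, h', mem_TT_cons] at h
    simpa using h
  · rintro ⟨⟨l, F⟩, r⟩ h
    simp
  · rintro ⟨l, F⟩ h
    rw [mem_filter] at h
    obtain ⟨h, h'⟩ := h
    simp only at h'
    simp only [← h', Fin.cons_self_tail]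
  · rintro ⟨⟨l, F⟩, r⟩ h
    rfl

lemma PP_zero_succ (w : ℕ) : PP a b 0 w = X ^ w := by
  have : TT 0 w = univ := by
    ext pr; simp [TT, IsCCT]
  rw [PP, this, Fintype.sum_prod_type, Fintype.sum_unique, Fintype.sum_unique]
  simp [wt, SF, aCount, bCount]

lemma mem_TT_snoc {k w : ℕ} (l : Fin k → Fin (w + 1)) 
    (F : Fin k → Fin w → Option Bool) :
    ((fun i => (l i).castSucc : Fin k → Fin (w + 1 + 1)),
      (fun i => Fin.snoc (F i) none : Fin k → Fin (w + 1) → Option Bool)) ∈ TT k (w + 1) ↔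
    (l, F) ∈ TT k w := by
  have h1 : ∀ c : Fin w, ¬ (Fin.last w) < Fin.castSucc c := fun c => by
    simp [Fin.lt_def]
  have h2 : ∀ i, (l i : ℕ) ≤ w := fun i => by omega
  have h3 : ∀ i, ¬ w < (l i : ℕ) := fun i => by omega
  simp [TT, mem_filter, IsCCT, Fin.forall_fin_succ', h1, h2, h3, Fin.castSucc_lt_last]

lemma wt_snoc {k w : ℕ} (F : Fin k → Fin w → Option Bool) :
    wt a b (fun i => Fin.snoc (F i) none : Fin k → Fin (w + 1) → Option Bool) =
      X * wt a b F := by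
  have hS : SF (fun i => Fin.snoc (F i) none : Fin k → Fin (w + 1) → Option Bool) =
      insert (Fin.last w) ((SF F).map Fin.castSuccEmb) := by
    ext c
    induction c using Fin.lastCases <;> simp [SF, Fin.castSucc_ne_last]
  have hc : (SF (fun i => Fin.snoc (F i) none : Fin k → Fin (w + 1) → Option Bool)).card
      = (SF F).card + 1 := by
    rw [hS, card_insert_of_notMem, card_map]
    simp [Fin.castSucc_ne_last]
  have hcc : (SF (fun i => Fin.snoc (F i) none : Fin k → Fin (w + 1) → Option Bool))ᶜ.card
      = (SF F)ᶜ.card := by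
    rw [card_compl, card_compl, hc]; simp
  have hA : ∀ r : Fin w → Option Bool,
      (rA (Fin.snoc r none : Fin (w + 1) → Option Bool)).card = (rA r).card := by
    intro r
    simp only [rA, card_filter, Fin.sum_univ_castSucc, Fin.snoc_castSucc, Fin.snoc_last]
    simp
  have hB : ∀ r : Fin w → Option Bool,
      (rB (Fin.snoc r none : Fin (w + 1) → Option Bool)).card = (rB r).card := by
    intro r
    simp only [rB, card_filter, Fin.sum_univ_castSucc, Fin.snoc_castSucc, Fin.snoc_last]
    simp
  rw [wt, wt, hc, hcc, aCount_eq, bCount_eq, aCount_eq, bCount_eq]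
  simp only [hA, hB]
  ring

lemma PP_bot_zero (k : ℕ) :
    ∑ pr ∈ TT (k + 1) 0 with ¬ pr.1 0 = Fin.last 0, wt a b pr.2 = 0 := by
  rw [filter_false_of_mem, sum_empty]
  intro pr _
  rw [not_not]
  exact Subsingleton.elim (α := Fin 1) (pr.1 0) (Fin.last 0)

lemma PP_bot_succ (k w : ℕ) :
    ∑ pr ∈ TT (k + 1) (w + 1) with ¬ pr.1 0 = Fin.last (w + 1), wt a b pr.2
      = X * PP a b (k + 1) w := by
  rw [PP, mul_sum]
  symm
  refine sum_bij (fun (x : (Fin (k + 1) → Fin (w + 1)) × (Fin (k + 1) → Fin w → Option Bool)) _ =>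
      ((fun i => (x.1 i).castSucc : Fin (k + 1) → Fin (w + 1 + 1)),
      (fun i => Fin.snoc (x.2 i) none : Fin (k + 1) → Fin (w + 1) → Option Bool))) ?_ ?_ ?_ ?_
  · rintro ⟨l, F⟩ h
    rw [mem_filter, mem_TT_snoc]
    exact ⟨h, Fin.castSucc_ne_last _⟩
  · rintro ⟨l, F⟩ _ ⟨l', F'⟩ _ h
    simp only [Prod.mk.injEq] at h ⊢
    refine ⟨funext fun i => ?_, funext fun i => funext fun c => ?_⟩
    · exact Fin.castSucc_injective _ (congrFun h.1 i)
    · have := congrFun (congrFun h.2 i) c.castSucc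
      simpa using this
  · rintro ⟨l, F⟩ h
    rw [mem_filter] at h
    obtain ⟨h, h'⟩ := h
    have hh := h
    simp only [TT, mem_filter, mem_univ, true_and] at hh
    have hl : ∀ i, (l i : ℕ) < w + 1 := by
      intro i
      have h1 := hh.1 0 i (Fin.zero_le _)
      have h2 : (l 0 : ℕ) ≠ w + 1 := fun e => h' (Fin.ext e)
      have := (l 0).2
      omega
    have el : (fun i => ((l i).castLT (hl i)).castSucc) = l := by funext i; simp
    have eF : (fun i => Fin.snoc (fun c : Fin w => F i c.castSucc) none :
        Fin (k + 1) → Fin (w + 1) → Option Bool) = F := by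
      funext i c
      induction c using Fin.lastCases with
      | last =>
        rw [Fin.snoc_last]
        refine (hh.2.1 i _ ?_).symm
        have := hl i
        simp only [Fin.val_last]; omega
      | cast c => simp
    refine ⟨(fun i => (l i).castLT (hl i), fun i c => F i c.castSucc), ?_, ?_⟩
    · rw [← mem_TT_snoc, el, eF]; exact h
    · simp only [el, eF]
  · rintro ⟨l, F⟩ _
    exact (wt_snoc a b F).symm

lemma PP_succ_zero (k : ℕ) : PP a b (k + 1) 0 = DD a b (PP a b k 0) := by
  rw [← PP_top, PP, ← sum_filter_add_sum_filter_not _ (fun pr => pr.1 0 = Fin.last 0),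
    PP_bot_zero, add_zero]

lemma PP_succ_succ (k w : ℕ) :
    PP a b (k + 1) (w + 1) = DD a b (PP a b k (w + 1)) + X * PP a b (k + 1) w := by
  rw [← PP_top, ← PP_bot_succ, PP, sum_filter_add_sum_filter_not]

noncomputable def QQ (n : ℕ) : R[X] := ∑ q ∈ antidiagonal n, PP a b q.1 q.2

lemma QQ_succ (n : ℕ) : QQ a b (n + 1) = DD a b (QQ a b n) + X * QQ a b n := by
  cases n with
  | zero =>
    simp [QQ, Finset.Nat.antidiagonal_succ, PP_succ_zero, PP_zero_succ]
    ring
  | succ n =>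
    have e1 := Finset.Nat.sum_antidiagonal_succ (n := n + 1) (f := fun q : ℕ × ℕ => PP a b q.1 q.2)
    have e2 := Finset.Nat.sum_antidiagonal_succ' (n := n)
      (f := fun q : ℕ × ℕ => PP a b (q.1 + 1) q.2)
    have e3 := Finset.Nat.sum_antidiagonal_succ' (n := n)
      (f := fun q : ℕ × ℕ => DD a b (PP a b q.1 q.2))
    have e4 := Finset.Nat.sum_antidiagonal_succ (n := n)
      (f := fun q : ℕ × ℕ => X * PP a b q.1 q.2)
    simp only at e1 e2 e3 e4
    rw [QQ, QQ, map_sum, mul_sum, e1, e2, e3, e4]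
    simp only [PP_succ_succ, PP_succ_zero, PP_zero_succ, sum_add_distrib]
    ring

lemma QQ_eq (n : ℕ) : QQ a b n = UU a b n := by
  induction n with
  | zero => simp [QQ, UU, PP_zero_succ, gb, ss]
  | succ n ih => rw [QQ_succ, UU_succ, ih]

lemma eval_wt {k w : ℕ} (F : Fin k → Fin w → Option Bool) :
    (wt a b F).eval b = a ^ (k + aCount k w F) * b ^ (w + bCount k w F) := by
  have := card_add_card_compl (SF F)
  rw [Fintype.card_fin] at this
  rw [wt, eval_mul, eval_C, eval_pow, eval_X, mul_assoc, ← pow_add]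
  congr 2
  omega

end CCTProof

/-- (Derrida's partition function formula) `Z_n(α,β)`, the sum of the weights of all
Condensed Catalan tableaux of size `(k,n)` over all `0 ≤ k ≤ n`, equals
`Σ_{p=1}^n b(n,p) Σ_{i=0}^p α^(n-i) β^(n-p+i)` where the ballot numbers `b(n,p)` are
the positive integers with `(2n-p)·b(n,p) = p·binom(2n-p, n)`. Here `α = X 0`,
`β = X 1` in `ℤ[α,β]`. -/
theorem stmt6 (n : ℕ) (hn : 1 ≤ n) :
    ∃ bal : ℕ → ℕ,
      (∀ p, 1 ≤ p → p ≤ n →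
        (2 * n - p) * bal p = p * Nat.choose (2 * n - p) n ∧ 0 < bal p) ∧
      (∑ k ∈ Finset.range (n + 1),
          ∑ pr ∈ Finset.univ.filter
              (fun pr : (Fin k → Fin (n - k + 1)) × (Fin k → Fin (n - k) → Option Bool) =>
                (∀ i j : Fin k, i ≤ j → (pr.1 j : ℕ) ≤ (pr.1 i : ℕ)) ∧
                IsCCT k (n - k) (fun i => (pr.1 i : ℕ)) pr.2),
            (MvPolynomial.X 0 : MvPolynomial (Fin 2) ℤ) ^ (k + aCount k (n - k) pr.2) *
              MvPolynomial.X 1 ^ ((n - k) + bCount k (n - k) pr.2))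
        = ∑ p ∈ Finset.Icc 1 n,
            (bal p : MvPolynomial (Fin 2) ℤ) *
              ∑ i ∈ Finset.range (p + 1),
                MvPolynomial.X 0 ^ (n - i) * MvPolynomial.X 1 ^ (n - p + i) := by
  refine ⟨fun p => CCTProof.gb (n - p) p, ?_, ?_⟩
  · intro p hp hpn
    constructor
    · have h := CCTProof.gb_closed (n - p) p (by omega)
      have e : 2 * (n - p) + p = 2 * n - p := by omega
      rw [e] at h
      rw [h, Nat.choose_symm_of_eq_add (show 2 * n - p = n + (n - p) by omega)]
    · obtain ⟨q, rfl⟩ : ∃ q, p = q + 1 := ⟨p - 1, by omega⟩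
      exact CCTProof.gb_pos _ _
  · have h := congrArg (Polynomial.eval (MvPolynomial.X 1 : MvPolynomial (Fin 2) ℤ))
      (CCTProof.QQ_eq (MvPolynomial.X 0 : MvPolynomial (Fin 2) ℤ) (MvPolynomial.X 1) n)
    rw [CCTProof.QQ, CCTProof.UU, ← Finset.Nat.sum_antidiagonal_swap (n := n)
      (f := fun q : ℕ × ℕ => Polynomial.C (((MvPolynomial.X 0 : MvPolynomial (Fin 2) ℤ) *
        MvPolynomial.X 1) ^ q.1 * (CCTProof.gb q.1 q.2 : MvPolynomial (Fin 2) ℤ)) *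
          CCTProof.ss (MvPolynomial.X 0) q.2),
      Finset.Nat.sum_antidiagonal_eq_sum_range_succ_mk,
      Finset.Nat.sum_antidiagonal_eq_sum_range_succ_mk, Polynomial.eval_finsetSum,
      Polynomial.eval_finsetSum] at h
    simp only [CCTProof.PP, Polynomial.eval_finsetSum, CCTProof.eval_wt, Prod.swap] at h
    refine Eq.trans ?_ (h.trans ?_)
    · rfl
    · symm
      have hsub : Finset.Icc 1 n ⊆ Finset.range (n + 1) := by
        intro x hx
        simp only [Finset.mem_Icc, Finset.mem_range] at hx ⊢
        omega
      rw [← Finset.sum_subset hsub]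
      · refine Finset.sum_congr rfl fun p hp => ?_
        rw [Finset.mem_Icc] at hp
        rw [Polynomial.eval_mul, Polynomial.eval_C, CCTProof.ss, Polynomial.eval_finsetSum,
          mul_comm (_ ^ _) (Nat.cast _), mul_assoc]
        congr 1
        rw [Finset.mul_sum]
        refine Finset.sum_congr rfl fun i hi => ?_
        rw [Finset.mem_range] at hi
        rw [Polynomial.eval_mul, Polynomial.eval_C, Polynomial.eval_pow, Polynomial.eval_X, mul_pow,
          show n - i = (n - p) + (p - i) by omega, pow_add, pow_add]
        ring
      · intro p hp hp'
        have : p = 0 := by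
          simp only [Finset.mem_Icc, Finset.mem_range] at hp hp'
          omega
        subst this
        obtain ⟨q, rfl⟩ : ∃ q, n = q + 1 := ⟨n - 1, by omega⟩
        simp [CCTProof.gb]
end

section
/- Fix integers n ≥ 1 and s, t with 1 ≤ s ≤ n and 0 ≤ t ≤ s. The coefficient of the monomial α^{n−t} β^{n+t−s} in the polynomial Σ_{k=0}^{n} N_{n−k,k}(α,β) ∈ ℤ[α,β] equals (s/(2n−s))·binom(2n−s, n); equivalently, (2n−s) times this coefficient equals s·binom(2n−s, n). In particular the coefficient does not depend on t. -/
open scoped Classical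
open Finset

def fcols (k w : ℕ) (F : Fin k → Fin w → Option Bool) : Finset (Fin w) :=
  Finset.univ.filter fun c => ∀ i, F i c ≠ some true

def frows (k w : ℕ) (F : Fin k → Fin w → Option Bool) : Finset (Fin k) :=
  Finset.univ.filter fun i => ∀ c, F i c ≠ some false

def VT (k w : ℕ) (pr : (Fin k → Fin (w + 1)) × (Fin k → Fin w → Option Bool)) : Prop :=
  (∀ i j : Fin k, i ≤ j → (pr.1 j : ℕ) ≤ (pr.1 i : ℕ)) ∧
    IsCCT k w (fun i => (pr.1 i : ℕ)) pr.2

noncomputable def GG (k w : ℕ) (h : ℕ → ℕ → ℤ) : ℤ :=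
  ∑ pr ∈ Finset.univ.filter (VT k w), h (fcols k w pr.2).card (frows k w pr.2).card

def RV {w : ℕ} (U : Finset (Fin w)) (ρ : Fin w → Option Bool) : Prop :=
  (∀ c, ρ c ≠ none → c ∈ U) ∧ (∀ c c', ρ c = some false → c' < c → ρ c' = none) ∧
  (∀ c, c ∈ U → (∀ c', c < c' → ρ c' ≠ some false) → ρ c ≠ none)

theorem sum_le_rank {w : ℕ} (U : Finset (Fin w)) (g : ℕ → ℤ) :
    ∑ p ∈ U, g (U.filter (· ≤ p)).card = ∑ i ∈ range U.card, g (i + 1) := by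
  induction U using Finset.induction_on_max with
  | empty => simp
  | insert m U hm ih =>
    have hmU : m ∉ U := fun h => lt_irrefl _ (hm m h)
    rw [Finset.sum_insert hmU, Finset.card_insert_of_notMem hmU, Finset.sum_range_succ, ← ih,
      add_comm]
    congr 1
    · apply Finset.sum_congr rfl
      intro p hp
      rw [Finset.filter_insert, if_neg (not_le.mpr (hm p hp))]
    · rw [Finset.filter_true_of_mem, Finset.card_insert_of_notMem hmU]
      intro x hx
      rcases Finset.mem_insert.mp hx with rfl | h
      · exact le_rfl
      · exact (hm x h).le

theorem row_sum_s7 {w : ℕ} (U : Finset (Fin w)) (g : ℕ → ℕ → ℤ) :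
    ∑ ρ ∈ Finset.univ.filter (RV U),
      g (U.filter fun c => ρ c ≠ some true).card (if ∀ c, ρ c ≠ some false then 1 else 0)
    = g 0 1 + ∑ i ∈ range U.card, g (i + 1) 0 := by
  rw [← Finset.sum_filter_add_sum_filter_not _ (fun ρ : Fin w → Option Bool => ∀ c, ρ c ≠ some false)]
  congr 1
  · have : (Finset.univ.filter (RV U)).filter (fun ρ : Fin w → Option Bool => ∀ c, ρ c ≠ some false)
        = {fun c => if c ∈ U then some true else none} := by
      ext ρ
      simp only [Finset.mem_filter, Finset.mem_univ, true_and, Finset.mem_singleton]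
      constructor
      · rintro ⟨⟨h1, h2, h3⟩, h4⟩
        funext c
        have a := h1 c
        have b := h3 c
        have d := h4 c
        by_cases hc : c ∈ U
        · have := b hc (fun c' _ => h4 c')
          rw [if_pos hc]
          rcases hh : ρ c with _ | _ | _ <;> simp_all
        · rw [if_neg hc]
          by_contra hne
          exact hc (a hne)
      · rintro rfl
        refine ⟨⟨?_, ?_, ?_⟩, ?_⟩
        · intro c; by_cases hc : c ∈ U <;> simp [hc]
        · intro c c'; by_cases hc : c ∈ U <;> simp [hc]
        · intro c hc; simp [hc]
        · intro c; by_cases hc : c ∈ U <;> simp [hc]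
    rw [this, Finset.sum_singleton, if_pos, Finset.filter_false_of_mem]
    · simp
    · intro c hc; simp [hc]
    · intro c; by_cases hc : c ∈ U <;> simp [hc]
  · rw [← sum_le_rank U (fun i => g i 0)]
    symm
    refine Finset.sum_bij
      (fun p _ => fun c => if c < p then none else if c = p then some false else
        if c ∈ U then some true else none) ?_ ?_ ?_ ?_
    · intro p hp
      simp only [Finset.mem_filter, Finset.mem_univ, true_and]
      refine ⟨⟨?_, ?_, ?_⟩, ?_⟩
      · intro c; dsimp only; split_ifs <;> simp_all
      · intro c c' h1 h2
        have : c = p := by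
          dsimp only at h1; split_ifs at h1 <;> simp_all
        subst this
        simp [h2]
      · intro c hc h
        have : ¬ c < p := fun hlt => by simpa using h p hlt
        show (if c < p then none else if c = p then some false else if c ∈ U then some true else none : Option Bool) ≠ none
        rw [if_neg this, if_pos hc]
        split_ifs <;> simp
      · intro h; simpa using h p
    · intro p hp q hq h
      have h1 := congrFun h p
      have h2 := congrFun h q
      by_contra hne
      rcases lt_or_gt_of_ne hne with hlt | hlt
      · simp [hlt] at h1
      · simp [hlt] at h2
    · intro ρ hρ
      simp only [Finset.mem_filter, Finset.mem_univ, true_and, not_forall, not_not] at hρ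
      obtain ⟨⟨h1, h2, h3⟩, p, hp⟩ := hρ
      refine ⟨p, h1 p (by simp [hp]), ?_⟩
      have hg : ∀ c, p < c → ρ c ≠ some false := fun c hc h => by
        have := h2 c p h hc
        simp [hp] at this
      funext c
      split_ifs with a b d
      · exact (h2 p c hp a).symm
      · rw [b, hp]
      · have hc : p < c := lt_of_le_of_ne (not_lt.mp a) (Ne.symm b)
        have e1 := h3 c d (fun c' hc' => hg c' (hc.trans hc'))
        have e2 := hg c hc
        rcases hh : ρ c with _ | _ | _ <;> simp_all
      · by_contra hne
        exact d (h1 c (Ne.symm hne))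
    · intro p hp
      rw [if_neg]
      · congr 2
        apply Finset.filter_congr
        intro c hc
        rcases lt_trichotomy c p with h | h | h
        · simp [h, h.le]
        · simp [h]
        · simp [h.not_ge, h.ne', hc, h.not_gt]
      · intro h; simpa using h p

theorem col_sum (k w : ℕ) (h : ℕ → ℕ → ℤ) :
    ∑ pr ∈ Finset.univ.filter (fun pr => VT k (w + 1) pr ∧ ∀ i, (pr.1 i : ℕ) ≤ w),
      h (fcols k (w + 1) pr.2).card (frows k (w + 1) pr.2).card
    = GG k w (fun f r => h (f + 1) r) := by
  symm
  unfold GG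
  refine Finset.sum_bij (fun pr _ => ((fun i => (pr.1 i).castSucc),
    (fun i => (Fin.snoc (pr.2 i) none : Fin (w + 1) → Option Bool)))) ?_ ?_ ?_ ?_
  · rintro ⟨l, F⟩ hp
    simp only [Finset.mem_filter, Finset.mem_univ, true_and] at hp ⊢
    simp only [VT, IsCCT] at hp ⊢
    obtain ⟨h0, h1, h2, h3, h4⟩ := hp
    refine ⟨⟨?_, ?_, ?_, ?_, ?_⟩, ?_⟩
    · simpa using h0
    · intro i c
      refine Fin.lastCases ?_ (fun c => ?_) c
      · simp
      · simpa using h1 i c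
    · intro i c c'
      refine Fin.lastCases ?_ (fun c => ?_) c
      · simp
      · refine Fin.lastCases ?_ (fun c' => ?_) c'
        · simp
        · simpa using h2 i c c'
    · intro i i' c
      refine Fin.lastCases ?_ (fun c => ?_) c
      · simp
      · simpa using h3 i i' c
    · intro i c
      refine Fin.lastCases ?_ (fun c => ?_) c
      · simp; intro hh; have := (l i).isLt; omega
      · intro a b d
        have := h4 i c (by simpa using a) (fun i' hi => by simpa using b i' hi)
          (fun c' hc hl => by simpa using d c'.castSucc (by simpa using hc) (by simpa using hl))
        simpa using this
    · intro i; have := (l i).isLt; simp; omega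
  · rintro ⟨l, F⟩ _ ⟨l', F'⟩ _ he
    simp only [Prod.mk.injEq] at he ⊢
    refine ⟨?_, ?_⟩
    · funext i
      have := congrFun he.1 i
      exact Fin.castSucc_injective _ this
    · funext i c
      have := congrFun (congrFun he.2 i) c.castSucc
      simpa using this
  · rintro ⟨l, F⟩ hp
    simp only [Finset.mem_filter, Finset.mem_univ, true_and] at hp
    simp only [VT, IsCCT] at hp
    obtain ⟨⟨h0, h1, h2, h3, h4⟩, h5⟩ := hp
    refine ⟨(fun i => ⟨(l i : ℕ), Nat.lt_succ_of_le (h5 i)⟩, fun i c => F i c.castSucc), ?_, ?_⟩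
    · simp only [Finset.mem_filter, Finset.mem_univ, true_and]
      simp only [VT, IsCCT]
      refine ⟨h0, ?_, ?_, ?_, ?_⟩
      · intro i c hc; exact h1 i _ (by simpa using hc)
      · intro i c c' hc hl; exact h2 i _ _ hc (by simpa using hl)
      · intro i i' c hc hl; exact h3 i i' _ hc hl
      · intro i c hc a b
        refine h4 i _ (by simpa using hc) a ?_
        intro c'
        refine Fin.lastCases ?_ (fun c' => ?_) c'
        · intro _ hl; have := h5 i; simp at hl; omega
        · intro hc' hl; exact b c' (by simpa using hc') (by simpa using hl)
    · simp only [Prod.mk.injEq]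
      refine ⟨?_, ?_⟩
      · funext i; ext; simp
      · funext i c
        refine Fin.lastCases ?_ (fun c => ?_) c
        · simp only [Fin.snoc_last]
          exact (h1 i (Fin.last w) (by simpa using h5 i)).symm
        · simp
  · rintro ⟨l, F⟩ hp
    dsimp only
    congr 1
    · have : fcols k (w + 1) (fun i => (Fin.snoc (F i) none : Fin (w + 1) → Option Bool))
          = insert (Fin.last w) ((fcols k w F).map Fin.castSuccEmb) := by
        ext c
        refine Fin.lastCases ?_ (fun c => ?_) c
        · simp [fcols]
        · simp [fcols]
      rw [this, Finset.card_insert_of_notMem, Finset.card_map]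
      simp
    · congr 1
      ext i
      simp [frows, Fin.forall_fin_succ']

theorem rows_sum (k w : ℕ) (h : ℕ → ℕ → ℤ) :
    ∑ pr ∈ Finset.univ.filter (fun pr => VT (k + 1) w pr ∧ (pr.1 0 : ℕ) = w),
      h (fcols (k + 1) w pr.2).card (frows (k + 1) w pr.2).card
    = GG k w (fun f r => h 0 (r + 1) + ∑ i ∈ range f, h (i + 1) r) := by
  have e : GG k w (fun f r => h 0 (r + 1) + ∑ i ∈ range f, h (i + 1) r)
     = ∑ pr ∈ Finset.univ.filter (VT k w), ∑ ρ ∈ Finset.univ.filter (RV (fcols k w pr.2)),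
        h ((fcols k w pr.2).filter fun c => ρ c ≠ some true).card ((frows k w pr.2).card +
          (if ∀ c, ρ c ≠ some false then 1 else 0)) := by
    unfold GG
    apply Finset.sum_congr rfl
    intro pr _
    rw [row_sum_s7 (fcols k w pr.2) (fun f r => h f ((frows k w pr.2).card + r))]
    simp
  rw [e, Finset.sum_sigma']
  symm
  refine Finset.sum_bij (fun x _ => ((Fin.cons (Fin.last w) x.1.1 : Fin (k + 1) → Fin (w + 1)),
    (Fin.cons x.2 x.1.2 : Fin (k + 1) → Fin w → Option Bool))) ?_ ?_ ?_ ?_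
  · rintro ⟨⟨l, F⟩, ρ⟩ hp
    simp only [Finset.mem_sigma, Finset.mem_filter, Finset.mem_univ, true_and] at hp ⊢
    simp only [VT, IsCCT, RV] at hp ⊢
    simp only [fcols, Finset.mem_filter, Finset.mem_univ, true_and] at hp ⊢
    obtain ⟨⟨h0, h1, h2, h3, h4⟩, r1, r2, r3⟩ := hp
    refine ⟨⟨?_, ?_, ?_, ?_, ?_⟩, ?_⟩
    · intro i j
      refine Fin.cases ?_ (fun i => ?_) i
      · intro _; have := (Fin.cons (Fin.last w) l : Fin (k + 1) → Fin (w + 1)) j |>.isLt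
        simp; exact Fin.le_last _
      · refine Fin.cases ?_ (fun j => ?_) j
        · intro hh; simp at hh
        · simpa using h0 i j
    · intro i c
      refine Fin.cases ?_ (fun i => ?_) i
      · intro hh; have := c.isLt; simp at hh; omega
      · simpa using h1 i c
    · intro i c c'
      refine Fin.cases ?_ (fun i => ?_) i
      · simpa using r2 c c'
      · simpa using h2 i c c'
    · intro i i' c
      refine Fin.cases ?_ (fun i => ?_) i
      · intro _ hh; simp at hh
      · refine Fin.cases ?_ (fun i' => ?_) i'
        · intro hF _
          simp only [Fin.cons_succ, Fin.cons_zero] at hF ⊢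
          by_contra hne
          exact r1 c hne i hF
        · simpa using h3 i i' c
    · intro i c
      refine Fin.cases ?_ (fun i => ?_) i
      · intro _ a b
        refine r3 c (fun i => ?_) (fun c' hc' => ?_)
        · simpa using a i.succ (Fin.succ_pos i)
        · simpa using b c' hc' (by simp)
      · intro a b d
        have := h4 i c (by simpa using a)
          (fun i' hi => by simpa using b i'.succ (by simpa using hi))
          (fun c' hc hl => by simpa using d c' hc (by simpa using hl))
        simpa using this
    · simp
  · rintro ⟨⟨l, F⟩, ρ⟩ _ ⟨⟨l', F'⟩, ρ'⟩ _ he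
    simp only [Prod.mk.injEq, Fin.cons_inj] at he
    obtain ⟨⟨_, rfl⟩, rfl, rfl⟩ := he
    rfl
  · rintro ⟨l, F⟩ hp
    simp only [Finset.mem_filter, Finset.mem_univ, true_and] at hp
    simp only [VT, IsCCT] at hp
    obtain ⟨⟨h0, h1, h2, h3, h4⟩, h5⟩ := hp
    refine ⟨⟨(fun i => l i.succ, fun i => F i.succ), F 0⟩, ?_, ?_⟩
    · simp only [Finset.mem_sigma, Finset.mem_filter, Finset.mem_univ, true_and]
      simp only [VT, IsCCT, RV]
      simp only [fcols, Finset.mem_filter, Finset.mem_univ, true_and]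
      refine ⟨⟨?_, ?_, ?_, ?_, ?_⟩, ?_, ?_, ?_⟩
      · intro i j hij; exact h0 _ _ (by simpa using hij)
      · intro i c hc; exact h1 _ c hc
      · intro i c c' hc hl; exact h2 _ c c' hc hl
      · intro i i' c hc hl; exact h3 _ _ c hc (by simpa using hl)
      · intro i c hc a b
        refine h4 _ c hc ?_ b
        intro i'
        refine Fin.cases ?_ (fun i' => ?_) i'
        · intro hh; simp at hh
        · intro hh; exact a i' (by simpa using hh)
      · intro c hc i hF; exact hc (h3 _ 0 c hF (Fin.succ_pos i))
      · intro c c' hc hl; exact h2 0 c c' hc hl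
      · intro c hc a
        refine h4 0 c (by rw [h5]; exact c.isLt) ?_ (fun c' hc' _ => a c' hc')
        intro i'
        refine Fin.cases ?_ (fun i' => ?_) i'
        · intro hh; simp at hh
        · intro _; exact hc i'
    · simp only [Prod.mk.injEq]
      refine ⟨?_, ?_⟩
      · funext i
        refine Fin.cases ?_ (fun i => ?_) i
        · ext; simp [h5]
        · simp
      · funext i
        refine Fin.cases ?_ (fun i => ?_) i
        · simp
        · simp
  · rintro ⟨⟨l, F⟩, ρ⟩ hp
    dsimp only
    congr 1
    · congr 1
      ext c
      simp [fcols, Fin.forall_fin_succ, and_comm]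
    · have : frows (k + 1) w (Fin.cons ρ F : Fin (k + 1) → Fin w → Option Bool)
          = (if ∀ c, ρ c ≠ some false then {0} else ∅) ∪ ((frows k w F).map (Fin.succEmb k)) := by
        ext i
        refine Fin.cases ?_ (fun i => ?_) i
        · by_cases hh : ∀ c, ρ c ≠ some false <;> simp [frows, hh]
        · by_cases hh : ∀ c, ρ c ≠ some false <;> simp [frows, hh]
      rw [this, Finset.card_union_of_disjoint, Finset.card_map, add_comm]
      · congr 1
        split_ifs <;> simp
      · split_ifs <;> simp

def Tr (h : ℕ → ℕ → ℤ) (f r : ℕ) : ℤ := h (f + 1) r + (h 0 (r + 1) + ∑ i ∈ range f, h (i + 1) r)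

theorem GG_zero (w : ℕ) (h : ℕ → ℕ → ℤ) :
    GG 0 (w + 1) h = GG 0 w (fun f r => h (f + 1) r) := by
  rw [← col_sum]
  unfold GG
  apply Finset.sum_congr _ (fun _ _ => rfl)
  ext pr
  simp

theorem GG_succ_zero (k : ℕ) (h : ℕ → ℕ → ℤ) :
    GG (k + 1) 0 h = GG k 0 (fun f r => h 0 (r + 1) + ∑ i ∈ range f, h (i + 1) r) := by
  rw [← rows_sum]
  unfold GG
  apply Finset.sum_congr _ (fun _ _ => rfl)
  ext pr
  have := (pr.1 0).isLt
  have h0 : ((pr.1 0 : Fin (0 + 1)) : ℕ) = 0 := by omega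
  simp [h0]

theorem GG_succ_succ (k w : ℕ) (h : ℕ → ℕ → ℤ) :
    GG (k + 1) (w + 1) h = GG k (w + 1) (fun f r => h 0 (r + 1) + ∑ i ∈ range f, h (i + 1) r)
      + GG (k + 1) w (fun f r => h (f + 1) r) := by
  rw [← rows_sum, ← col_sum]
  unfold GG
  rw [← Finset.sum_filter_add_sum_filter_not _ (fun pr => (pr.1 0 : ℕ) = w + 1)]
  rw [Finset.filter_filter, Finset.filter_filter]
  congr 1
  apply Finset.sum_congr _ (fun _ _ => rfl)
  ext pr
  simp only [Finset.mem_filter, Finset.mem_univ, true_and]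
  refine and_congr_right fun hv => ⟨fun hh i => ?_, fun hh => ?_⟩
  · have := hv.1 0 i (Fin.zero_le i)
    have := (pr.1 0).isLt
    omega
  · have := hh 0
    omega

theorem GG_add (k w : ℕ) (h h' : ℕ → ℕ → ℤ) :
    GG k w (fun f r => h f r + h' f r) = GG k w h + GG k w h' := by
  unfold GG
  rw [Finset.sum_add_distrib]

noncomputable def ZZ (n : ℕ) (h : ℕ → ℕ → ℤ) : ℤ :=
  ∑ p ∈ Finset.HasAntidiagonal.antidiagonal n, GG p.1 p.2 h

noncomputable def YY (h : ℕ → ℕ → ℤ) (k : ℕ) : ℕ → ℤ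
  | 0 => 0
  | w + 1 => GG k w (fun f r => h (f + 1) r)

theorem ZZ_succ (n : ℕ) (h : ℕ → ℕ → ℤ) : ZZ (n + 1) h = ZZ n (Tr h) := by
  have e1 : ZZ (n + 1) h = GG 0 (n + 1) h + ∑ p ∈ Finset.HasAntidiagonal.antidiagonal n, GG (p.1 + 1) p.2 h := by
    unfold ZZ
    rw [Finset.Nat.sum_antidiagonal_succ]
  have e2 : ∀ k w, GG (k + 1) w h =
      GG k w (fun f r => h 0 (r + 1) + ∑ i ∈ range f, h (i + 1) r) + YY h (k + 1) w := by
    intro k w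
    cases w with
    | zero => rw [GG_succ_zero]; simp [YY]
    | succ w => rw [GG_succ_succ]; rfl
  have e3 := Finset.Nat.sum_antidiagonal_succ (n := n) (f := fun p => YY h p.1 p.2)
  have e4 := Finset.Nat.sum_antidiagonal_succ' (n := n) (f := fun p => YY h p.1 p.2)
  rw [e1]
  simp only [e2, Finset.sum_add_distrib]
  have e5 : ZZ n (Tr h) = ∑ p ∈ Finset.HasAntidiagonal.antidiagonal n, GG p.1 p.2 (fun f r => h (f + 1) r)
      + ∑ p ∈ Finset.HasAntidiagonal.antidiagonal n,
        GG p.1 p.2 (fun f r => h 0 (r + 1) + ∑ i ∈ range f, h (i + 1) r) := by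
    rw [← Finset.sum_add_distrib]
    unfold ZZ
    apply Finset.sum_congr rfl
    intro p _
    rw [← GG_add]
    rfl
  rw [e5, GG_zero]
  have y1 : ∀ k w, YY h k (w + 1) = GG k w (fun f r => h (f + 1) r) := fun _ _ => rfl
  have y0 : ∀ k, YY h k 0 = 0 := fun _ => rfl
  simp only [y1, y0] at e3 e4
  rw [e3] at e4
  linarith

def dl (t r : ℕ) (f r' : ℕ) : ℤ := if f = t ∧ r' = r then 1 else 0
def ta (t r : ℕ) (f r' : ℕ) : ℤ := if t ≤ f ∧ r' = r then 1 else 0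

theorem Tr_dl (t r : ℕ) : Tr (dl (t + 1) r) = ta t r := by
  funext f r'
  simp only [Tr, dl, ta]
  by_cases hr : r' = r
  · simp only [hr, and_true, Nat.add_right_cancel_iff]
    have : ∀ f, ∑ i ∈ range f, (if i = t then (1 : ℤ) else 0) = if t < f then 1 else 0 := by
      intro f; rw [Finset.sum_ite_eq']; simp
    rw [this]
    have h1 : ¬ (0 = t + 1 ∧ r + 1 = r) := by omega
    rw [if_neg h1]
    split_ifs <;> first | omega | simp
  · have h1 : ¬ (0 = t + 1 ∧ r' + 1 = r) := by omega
    simp [hr]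

theorem Tr_dl0 (r : ℕ) : Tr (dl 0 (r + 1)) = ta 0 r := by
  funext f r'
  simp [Tr, dl, ta]

theorem Tr_dl00 : Tr (dl 0 0) = fun _ _ => 0 := by
  funext f r'
  simp [Tr, dl]

theorem ta_eq (t r : ℕ) : ta t r = fun f r' => dl t r f r' + ta (t + 1) r f r' := by
  funext f r'
  simp only [dl, ta]
  split_ifs <;> first | omega | simp

theorem ZZ_ta (n t r : ℕ) : ZZ n (ta t r) = ZZ n (dl t r) + ZZ n (ta (t + 1) r) := by
  rw [ta_eq]
  unfold ZZ
  simp only [GG_add, Finset.sum_add_distrib]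

theorem cc_rec (n t r : ℕ) :
    ZZ (n + 1) (dl (t + 1) r) = ZZ n (dl t r) + ZZ (n + 1) (dl (t + 2) r) := by
  rw [ZZ_succ, ZZ_succ, Tr_dl, Tr_dl, ZZ_ta]

theorem cc_zero (n r : ℕ) : ZZ (n + 1) (dl 0 (r + 1)) = ZZ (n + 1) (dl 1 r) := by
  rw [ZZ_succ, ZZ_succ, Tr_dl, Tr_dl0]

theorem cc_zero_zero (n : ℕ) : ZZ (n + 1) (dl 0 0) = 0 := by
  rw [ZZ_succ, Tr_dl00]
  simp [ZZ, GG]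

theorem cc_big (n t r : ℕ) (h : n < t + r) : ZZ n (dl t r) = 0 := by
  unfold ZZ GG
  apply Finset.sum_eq_zero
  intro p hp
  apply Finset.sum_eq_zero
  intro pr _
  have h1 : (fcols p.1 p.2 pr.2).card ≤ p.2 := by
    simpa using Finset.card_le_univ (fcols p.1 p.2 pr.2)
  have h2 : (frows p.1 p.2 pr.2).card ≤ p.1 := by
    simpa using Finset.card_le_univ (frows p.1 p.2 pr.2)
  have := Finset.HasAntidiagonal.mem_antidiagonal.mp hp
  simp only [dl]
  rw [if_neg]
  omega

theorem cc_base : ZZ 0 (dl 0 0) = 1 := by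
  have : (Finset.univ.filter (VT 0 0)) = Finset.univ := by
    ext pr
    simp [VT, IsCCT]
  simp [ZZ, GG, this, dl, fcols, frows]

theorem cc_diag (t r : ℕ) : ZZ (t + r) (dl t r) = 1 := by
  induction hn : t + r generalizing t r with
  | zero =>
    obtain rfl : t = 0 := by omega
    obtain rfl : r = 0 := by omega
    exact cc_base
  | succ n ih =>
    have key : ∀ t r, t + r = n → ZZ (n + 1) (dl (t + 1) r) = 1 := by
      intro t r h
      rw [cc_rec, cc_big (n + 1) (t + 2) r (by omega), ih t r h]
      rfl
    cases t with
    | zero =>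
      obtain rfl : r = n + 1 := by omega
      rw [cc_zero, key 0 n (by omega)]
    | succ t => exact key t r (by omega)

theorem cc_main (d s : ℕ) : ∀ t r, t + r = s →
    ((s + 2 * d : ℕ) : ℤ) * ZZ (s + d) (dl t r) = (s : ℤ) * ((s + 2 * d).choose d : ℤ) := by
  induction d generalizing s with
  | zero =>
    rintro t r rfl
    simp [cc_diag]
  | succ d ihd =>
    induction s with
    | zero =>
      intro t r h
      obtain rfl : t = 0 := by omega
      obtain rfl : r = 0 := by omega
      rw [show 0 + (d + 1) = d + 1 by omega, cc_zero_zero]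
      simp
    | succ s ihs =>
      have key : ∀ t r, t + r = s → ((s + 1 + 2 * (d + 1) : ℕ) : ℤ) *
          ZZ (s + 1 + (d + 1)) (dl (t + 1) r) =
          ((s + 1 : ℕ) : ℤ) * ((s + 1 + 2 * (d + 1)).choose (d + 1) : ℤ) := by
        intro t r h
        have a1 := ihs t r h
        have a2 := ihd (s + 2) (t + 2) r (by omega)
        rw [show s + 1 + (d + 1) = (s + (d + 1)) + 1 by omega, cc_rec]
        rw [show s + 2 + d = (s + (d + 1)) + 1 by omega] at a2
        rw [show s + 2 * (d + 1) = s + 2 * d + 2 by omega] at a1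
        rw [show s + 2 + 2 * d = s + 2 * d + 2 by omega] at a2
        rw [show s + 1 + 2 * (d + 1) = (s + 2 * d + 2) + 1 by omega, Nat.choose_succ_succ']
        have a3 := Nat.choose_succ_right_eq (s + 2 * d + 2) d
        rw [show s + 2 * d + 2 - d = s + d + 2 by omega] at a3
        have a3' : ((s + 2 * d + 2).choose (d + 1) : ℤ) * (d + 1)
          = ((s + 2 * d + 2).choose d : ℤ) * (s + d + 2) := by exact_mod_cast a3
        have hm : ((s + 2 * d + 2 : ℕ) : ℤ) ≠ 0 := by positivity
        apply mul_left_cancel₀ hm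
        generalize ZZ (s + (d + 1)) (dl t r) = P at *
        generalize ZZ (s + (d + 1) + 1) (dl (t + 2) r) = Q at *
        push_cast at *
        linear_combination (s + 2 * d + 3 : ℤ) * (a1 + a2) - 2 * a3'
      intro t r h
      cases t with
      | zero =>
        obtain rfl : r = s + 1 := by omega
        rw [show s + 1 + (d + 1) = (s + 1 + d) + 1 by omega, cc_zero]
        exact key 0 s (by omega)
      | succ t => exact key t r (by omega)

theorem a_count (k w : ℕ) (pr) (h : VT k w pr) :
    aCount k w pr.2 + (fcols k w pr.2).card = w := by
  have e : aCount k w pr.2 = (Finset.univ.filter fun c => ¬ ∀ i, pr.2 i c ≠ some true).card := by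
    unfold aCount
    refine Finset.card_bij (fun p _ => p.2) ?_ ?_ ?_
    · rintro ⟨i, c⟩ hp
      simp only [Finset.mem_filter, Finset.mem_univ, true_and] at hp ⊢
      exact fun hh => hh i hp
    · rintro ⟨i, c⟩ hp ⟨i', c'⟩ hp' he
      simp only [Finset.mem_filter, Finset.mem_univ, true_and] at hp hp' he
      subst he
      rcases lt_trichotomy i i' with hl | rfl | hl
      · have := h.2.2.2.1 i' i c hp' hl; simp [hp] at this
      · rfl
      · have := h.2.2.2.1 i i' c hp hl; simp [hp'] at this
    · intro c hc
      simp only [Finset.mem_filter, Finset.mem_univ, true_and, not_forall, not_not] at hc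
      obtain ⟨i, hi⟩ := hc
      exact ⟨(i, c), by simpa using hi, rfl⟩
  rw [e, fcols, add_comm, Finset.card_filter_add_card_filter_not]
  simp

theorem b_count (k w : ℕ) (pr) (h : VT k w pr) :
    bCount k w pr.2 + (frows k w pr.2).card = k := by
  have e : bCount k w pr.2 = (Finset.univ.filter fun i => ¬ ∀ c, pr.2 i c ≠ some false).card := by
    unfold bCount
    refine Finset.card_bij (fun p _ => p.1) ?_ ?_ ?_
    · rintro ⟨i, c⟩ hp
      simp only [Finset.mem_filter, Finset.mem_univ, true_and] at hp ⊢
      exact fun hh => hh c hp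
    · rintro ⟨i, c⟩ hp ⟨i', c'⟩ hp' he
      simp only [Finset.mem_filter, Finset.mem_univ, true_and] at hp hp' he
      subst he
      rcases lt_trichotomy c c' with hl | rfl | hl
      · have := h.2.2.1 i c' c hp' hl; simp [hp] at this
      · rfl
      · have := h.2.2.1 i c c' hp hl; simp [hp'] at this
    · intro i hc
      simp only [Finset.mem_filter, Finset.mem_univ, true_and, not_forall, not_not] at hc
      obtain ⟨c, hi⟩ := hc
      exact ⟨(i, c), by simpa using hi, rfl⟩
  rw [e, frows, add_comm, Finset.card_filter_add_card_filter_not]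
  simp

theorem coeff_mono (a b x y : ℕ) :
    MvPolynomial.coeff (Finsupp.single (0 : Fin 2) x + Finsupp.single (1 : Fin 2) y)
      ((MvPolynomial.X 0 : MvPolynomial (Fin 2) ℤ) ^ a * MvPolynomial.X 1 ^ b)
      = if a = x ∧ b = y then 1 else 0 := by
  rw [MvPolynomial.X_pow_eq_monomial, MvPolynomial.X_pow_eq_monomial, MvPolynomial.monomial_mul,
    MvPolynomial.coeff_monomial]
  have : (Finsupp.single (0 : Fin 2) a + Finsupp.single (1 : Fin 2) b
      = Finsupp.single (0 : Fin 2) x + Finsupp.single (1 : Fin 2) y) ↔ (a = x ∧ b = y) := by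
    constructor
    · intro h
      have h0 := DFunLike.congr_fun h 0
      have h1 := DFunLike.congr_fun h 1
      simp at h0 h1
      exact ⟨h0, h1⟩
    · rintro ⟨rfl, rfl⟩; rfl
  simp [this]

/-- The coefficient of `α^(n-t) β^(n+t-s)` in `Z_n(α,β) = Σ_{k=0}^n N_{n-k,k}(α,β)`
satisfies `(2n-s) · coeff = s · binom(2n-s, n)`; in particular it is
`(s/(2n-s))·binom(2n-s,n)`, independent of `t`. Here `α = X 0`, `β = X 1` in
`ℤ[α,β]`. -/
theorem stmt7 (n s t : ℕ) (hn : 1 ≤ n) (hs1 : 1 ≤ s) (hsn : s ≤ n) (hts : t ≤ s) :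
    ((2 * n - s : ℕ) : ℤ) *
        MvPolynomial.coeff
          (Finsupp.single (0 : Fin 2) (n - t) + Finsupp.single (1 : Fin 2) (n + t - s))
          (∑ k ∈ Finset.range (n + 1),
            ∑ pr ∈ Finset.univ.filter
                (fun pr : (Fin k → Fin (n - k + 1)) × (Fin k → Fin (n - k) → Option Bool) =>
                  (∀ i j : Fin k, i ≤ j → (pr.1 j : ℕ) ≤ (pr.1 i : ℕ)) ∧
                  IsCCT k (n - k) (fun i => (pr.1 i : ℕ)) pr.2),
              (MvPolynomial.X 0 : MvPolynomial (Fin 2) ℤ) ^ (k + aCount k (n - k) pr.2) *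
                MvPolynomial.X 1 ^ ((n - k) + bCount k (n - k) pr.2))
      = (s : ℤ) * (Nat.choose (2 * n - s) n : ℤ) := by
  rw [MvPolynomial.coeff_sum]
  have key : ∑ k ∈ Finset.range (n + 1), MvPolynomial.coeff
          (Finsupp.single (0 : Fin 2) (n - t) + Finsupp.single (1 : Fin 2) (n + t - s))
          (∑ pr ∈ Finset.univ.filter
                (fun pr : (Fin k → Fin (n - k + 1)) × (Fin k → Fin (n - k) → Option Bool) =>
                  (∀ i j : Fin k, i ≤ j → (pr.1 j : ℕ) ≤ (pr.1 i : ℕ)) ∧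
                  IsCCT k (n - k) (fun i => (pr.1 i : ℕ)) pr.2),
              (MvPolynomial.X 0 : MvPolynomial (Fin 2) ℤ) ^ (k + aCount k (n - k) pr.2) *
                MvPolynomial.X 1 ^ ((n - k) + bCount k (n - k) pr.2))
      = ZZ n (dl t (s - t)) := by
    unfold ZZ
    rw [Finset.Nat.sum_antidiagonal_eq_sum_range_succ_mk]
    apply Finset.sum_congr rfl
    intro k hk
    have hk' : k ≤ n := Nat.lt_succ_iff.mp (Finset.mem_range.mp hk)
    rw [MvPolynomial.coeff_sum]
    unfold GG
    apply Finset.sum_congr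
    · ext pr
      simp only [Finset.mem_filter, VT]
    · intro pr hpr
      have hv : VT k (n - k) pr := (Finset.mem_filter.mp hpr).2
      have ha := a_count k (n - k) pr hv
      have hb := b_count k (n - k) pr hv
      rw [coeff_mono, dl]
      dsimp only
      congr 1
      apply propext
      omega
  rw [key]
  obtain ⟨d, rfl⟩ := Nat.exists_eq_add_of_le hsn
  have hm := cc_main d s t (s - t) (by omega)
  rw [show 2 * (s + d) - s = s + 2 * d by omega, hm]
  congr 2
  rw [← Nat.choose_symm_of_eq_add]
  omega
end
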